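/- arXiv:1509.05724 — 2 statements merged into one kernel-verified Lean document; each statement's English description precedes it below -/
import Mathlib

section
/- Let n ≥ 2, let s be a real number with n−1 < s, and let A ⊆ ℝⁿ be a Borel set with dimH A > s. Then there is a Borel set B ⊆ ℝⁿ with dimH B ≤ n−1 such that for every x ∈ ℝⁿ \ B, the set of unit vectors e ∈ S^{n−1} for which dimH( A ∩ { x + r·e : r ∈ ℝ } ) ≥ s − (n−1) has positive (n−1)-dimensional Hausdorff measure in S^{n−1}. -/
open MeasureTheory Metric Set
open scoped ENNReal RealInnerProductSpace
open Filter Topology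
open scoped NNReal

section Capacity

variable {X ι : Type*}

/-- The sum over `j` of `w j * f j` times the indicator function of `U j`. -/
noncomputable def potential (U : ι → Set X) (w : ι → ℝ≥0) (f : ι → ℝ) (x : X) : ℝ≥0∞ :=
  ∑' j, (U j).indicator (fun _ => (w j : ℝ≥0∞) * ENNReal.ofReal (f j)) x

/-- The nonnegative square summable weights whose potential is at least `1` on `A`. -/
def admissible (U : ι → Set X) (w : ι → ℝ≥0) (A : Set X) : Set (lp (fun _ : ι => ℝ) 2) :=
  {f | (∀ j, 0 ≤ f j) ∧ ∀ x ∈ A, 1 ≤ potential U w f x}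

variable {U : ι → Set X} {w : ι → ℝ≥0}

lemma potential_mono {f g : ι → ℝ} (h : ∀ j, f j ≤ g j) (x : X) :
    potential U w f x ≤ potential U w g x := by
  refine ENNReal.tsum_le_tsum fun j => indicator_le_indicator ?_
  gcongr
  exact h j

lemma potential_add {f g : ι → ℝ} (hf : ∀ j, 0 ≤ f j) (hg : ∀ j, 0 ≤ g j) (x : X) :
    potential U w (fun j => f j + g j) x = potential U w f x + potential U w g x := by
  unfold potential
  rw [← ENNReal.tsum_add]
  refine tsum_congr fun j => ?_
  by_cases hx : x ∈ U j <;> simp [hx, ENNReal.ofReal_add (hf j) (hg j), mul_add]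

lemma potential_smul {f : ι → ℝ} {a : ℝ} (ha : 0 ≤ a) (x : X) :
    potential U w (fun j => a * f j) x = ENNReal.ofReal a * potential U w f x := by
  unfold potential
  rw [← ENNReal.tsum_mul_left]
  refine tsum_congr fun j => ?_
  by_cases hx : x ∈ U j
  · simp only [hx, indicator_of_mem, ENNReal.ofReal_mul ha]
    ring
  · simp [hx]

lemma lowerSemicontinuous_potential [TopologicalSpace X] (hU : ∀ j, IsOpen (U j)) (f : ι → ℝ) :
    LowerSemicontinuous (potential U w f) :=
  lowerSemicontinuous_tsum fun j => (hU j).lowerSemicontinuous_indicator (by positivity)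

lemma admissible_anti {A B : Set X} (h : A ⊆ B) : admissible U w B ⊆ admissible U w A :=
  fun _ hf => ⟨hf.1, fun x hx => hf.2 x (h hx)⟩

lemma convex_admissible (A : Set X) : Convex ℝ (admissible U w A) := by
  rintro f ⟨hf0, hf⟩ g ⟨hg0, hg⟩ a b ha hb hab
  refine ⟨fun j => ?_, fun x hx => ?_⟩
  · have := hf0 j
    have := hg0 j
    simp only [lp.coeFn_add, lp.coeFn_smul, Pi.add_apply, Pi.smul_apply, smul_eq_mul]
    positivity
  · have : potential U w (a • f + b • g : lp (fun _ : ι => ℝ) 2) x =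
        ENNReal.ofReal a * potential U w f x + ENNReal.ofReal b * potential U w g x := by
      rw [← potential_smul ha, ← potential_smul hb, ← potential_add]
      · rfl
      · exact fun j => mul_nonneg ha (hf0 j)
      · exact fun j => mul_nonneg hb (hg0 j)
    rw [this]
    calc (1 : ℝ≥0∞) = ENNReal.ofReal a * 1 + ENNReal.ofReal b * 1 := by
          rw [mul_one, mul_one, ← ENNReal.ofReal_add ha hb, hab, ENNReal.ofReal_one]
      _ ≤ _ := by
          gcongr
          · exact hf x hx
          · exact hg x hx

/-- A point of minimal norm in a nonempty closed convex subset of a Hilbert space. -/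
lemma exists_mem_forall_norm_sq_le_inner {F : Type*} [NormedAddCommGroup F]
    [InnerProductSpace ℝ F] [CompleteSpace F] {C : Set F} (hC : IsClosed C) (hconv : Convex ℝ C)
    (hne : C.Nonempty) : ∃ p ∈ C, ∀ q ∈ C, ‖p‖ ^ 2 ≤ ⟪p, q⟫ := by
  obtain ⟨p, hp, hmin⟩ := exists_norm_eq_iInf_of_complete_convex hne hC.isComplete hconv 0
  refine ⟨p, hp, fun q hq => ?_⟩
  have h := (norm_eq_iInf_iff_real_inner_le_zero hconv hp).1 hmin q hq
  rw [zero_sub, inner_neg_left, inner_sub_right, real_inner_self_eq_norm_sq] at h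
  linarith

/-- A decreasing sequence of closed convex sets meeting a fixed ball has a common point in it. -/
lemma exists_mem_iInter_norm_le_of_antitone {F : Type*} [NormedAddCommGroup F]
    [InnerProductSpace ℝ F] [CompleteSpace F] {C : ℕ → Set F} (hC : ∀ i, IsClosed (C i))
    (hconv : ∀ i, Convex ℝ (C i)) (hanti : Antitone C) {c : ℝ}
    (hne : ∀ i, ∃ q ∈ C i, ‖q‖ ≤ c) : ∃ p, (∀ i, p ∈ C i) ∧ ‖p‖ ≤ c := by
  choose q hq hqc using hne
  choose p hp hmin using fun i =>
    exists_mem_forall_norm_sq_le_inner (hC i) (hconv i) ⟨q i, hq i⟩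
  have hle : ∀ i, ∀ r ∈ C i, ‖p i‖ ≤ ‖r‖ := fun i r hr => by
    have h1 := hmin i r hr
    have h2 := real_inner_le_norm (p i) r
    by_contra! h
    have h3 := norm_nonneg r
    nlinarith
  have hpc : ∀ i, ‖p i‖ ≤ c := fun i => (hle i _ (hq i)).trans (hqc i)
  have hmono : Monotone fun i => ‖p i‖ ^ 2 := fun i j hij => by
    have := hle i (p j) (hanti hij (hp j))
    dsimp only
    gcongr
  have hbdd : BddAbove (range fun i => ‖p i‖ ^ 2) := by
    refine ⟨c ^ 2, ?_⟩
    rintro _ ⟨i, rfl⟩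
    have := hpc i
    dsimp only
    gcongr
  have hcau : CauchySeq p := by
    have hc := (tendsto_atTop_ciSup hmono hbdd).cauchySeq
    rw [Metric.cauchySeq_iff'] at hc ⊢
    intro ε hε
    obtain ⟨N, hN⟩ := hc (ε ^ 2) (by positivity)
    refine ⟨N, fun n hn => ?_⟩
    have h1 := hN n hn
    have h2 := hmin N (p n) (hanti hn (hp n))
    rw [Real.dist_eq] at h1
    have h3 := (le_abs_self _).trans_lt h1
    rw [dist_eq_norm]
    have h4 := norm_sub_sq_real (p n) (p N)
    rw [real_inner_comm] at h4
    refine lt_of_pow_lt_pow_left₀ 2 hε.le ?_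
    linarith
  obtain ⟨a, ha⟩ := cauchySeq_tendsto_of_complete hcau
  refine ⟨a, fun i => ?_, le_of_tendsto ha.norm (Eventually.of_forall hpc)⟩
  exact (hC i).mem_of_tendsto ha (eventually_atTop.2 ⟨i, fun j hj => hanti hj (hp j)⟩)

lemma exists_admissible_iUnion {A : ℕ → Set X} (hA : Monotone A) {c c' : ℝ} (hcc : c < c')
    (h : ∀ i, ∃ f ∈ admissible U w (A i), ‖f‖ ≤ c) :
    ∃ f ∈ admissible U w (⋃ i, A i), ‖f‖ ≤ c' := by
  obtain ⟨f, hf, hfc⟩ := exists_mem_iInter_norm_le_of_antitone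
    (C := fun i => closure (admissible U w (A i))) (fun i => isClosed_closure)
    (fun i => (convex_admissible _).closure)
    (fun i j hij => closure_mono (admissible_anti (hA hij)))
    (fun i => let ⟨f, hf, hfc⟩ := h i; ⟨f, subset_closure hf, hfc⟩)
  set ε := c' - c
  have hε : 0 < ε := sub_pos.2 hcc
  have hex : ∀ i : ℕ, ∃ g ∈ admissible U w (A i), ‖g - f‖ ≤ ε / 2 / 2 ^ i := fun i => by
    obtain ⟨g, hg, hgd⟩ := Metric.mem_closure_iff.1 (hf i) (ε / 2 / 2 ^ i) (by positivity)
    exact ⟨g, hg, by rw [← dist_eq_norm, dist_comm]; exact hgd.le⟩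
  choose g hg hgf using hex
  have hn : ∀ i, ‖lp.toNorm (g i - f)‖ ≤ ε / 2 / 2 ^ i := fun i => by
    rw [lp.norm_toNorm]; exact hgf i
  have hsum : Summable fun i => lp.toNorm (g i - f) :=
    Summable.of_norm_bounded (summable_geometric_two' ε) hn
  have hcoord : ∀ j, HasSum (fun i => |g i j - f j|)
      ((∑' i, lp.toNorm (g i - f) : lp (fun _ : ι => ℝ) 2) j) := fun j =>
    (lp.evalCLM ℝ (fun _ : ι => ℝ) 2 j).hasSum hsum.hasSum
  have hle : ∀ i j, g i j ≤ (lp.toNorm f + ∑' i, lp.toNorm (g i - f) :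
      lp (fun _ : ι => ℝ) 2) j := fun i j => by
    have h1 := le_hasSum (hcoord j) i fun _ _ => abs_nonneg _
    have h2 : (lp.toNorm f : lp (fun _ : ι => ℝ) 2) j = |f j| := rfl
    have h3 := le_abs_self (g i j - f j)
    have h4 := le_abs_self (f j)
    rw [lp.coeFn_add, Pi.add_apply]
    linarith
  refine ⟨lp.toNorm f + ∑' i, lp.toNorm (g i - f), ⟨fun j => ((hg 0).1 j).trans (hle 0 j), ?_⟩, ?_⟩
  · intro x hx
    obtain ⟨i, hi⟩ := mem_iUnion.1 hx
    exact ((hg i).2 x hi).trans (potential_mono (hle i) x)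
  · calc _ ≤ ‖lp.toNorm f‖ + ‖∑' i, lp.toNorm (g i - f)‖ := norm_add_le _ _
      _ ≤ c + ε := by
          rw [lp.norm_toNorm]
          exact add_le_add hfc (tsum_of_norm_bounded (hasSum_geometric_two' ε) hn)
      _ = c' := by simp [ε]

/-- An open subset of the Baire space containing a compact box contains all sequences that satisfy
finitely many of the constraints of the box. -/
lemma exists_forall_lt_le_subset_of_isOpen {N : ℕ → ℕ} {W : Set (ℕ → ℕ)} (hW : IsOpen W)
    (hNW : {α : ℕ → ℕ | ∀ i, α i ≤ N i} ⊆ W) : ∃ k, {α : ℕ → ℕ | ∀ i < k, α i ≤ N i} ⊆ W := by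
  have hcomp : IsCompact {α : ℕ → ℕ | ∀ i, α i ≤ N i} := by
    have h := isCompact_univ_pi fun i => (finite_Iic (N i)).isCompact
    convert h using 1
    ext α
    simp [Pi.le_def]
  have hcyl : ∀ β ∈ {α : ℕ → ℕ | ∀ i, α i ≤ N i}, ∃ k, PiNat.cylinder β k ⊆ W := fun β hβ => by
    obtain ⟨_, ⟨γ, k, rfl⟩, hmem, hsub⟩ :=
      (PiNat.isTopologicalBasis_cylinders fun _ : ℕ => ℕ).exists_subset_of_mem_open (hNW hβ) hW
    exact ⟨k, (PiNat.mem_cylinder_iff_eq.1 hmem) ▸ hsub⟩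
  choose! k hk using hcyl
  obtain ⟨t, hcov⟩ := hcomp.elim_nhds_subcover' (fun β _ => PiNat.cylinder β (k β))
    fun β _ => (PiNat.isOpen_cylinder _ β (k β)).mem_nhds (PiNat.self_mem_cylinder β _)
  refine ⟨t.sup fun β => k β, fun α hα => ?_⟩
  have hβ : (fun i => min (α i) (N i)) ∈ {α : ℕ → ℕ | ∀ i, α i ≤ N i} := fun i => min_le_right _ _
  obtain ⟨γ, hγt, hγ⟩ := mem_iUnion₂.1 (hcov hβ)
  refine hk γ γ.2 (PiNat.mem_cylinder_iff.2 fun i hi => ?_)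
  rw [← PiNat.mem_cylinder_iff.1 hγ i hi]
  exact (min_eq_left (hα i (hi.trans_le
    (Finset.le_sup (f := fun β : {α : ℕ → ℕ | ∀ i, α i ≤ N i} => k β) hγt)))).symm

/-- **Capacitability** of analytic sets. -/
lemma exists_admissible_of_forall_isCompact [TopologicalSpace X] (hU : ∀ j, IsOpen (U j))
    {A : Set X} (hA : AnalyticSet A) {c c' : ℝ} (hc : 0 < c) (hcc : c < c')
    (h : ∀ K ⊆ A, IsCompact K → ∃ f ∈ admissible U w K, ‖f‖ ≤ c) :
    ∃ f ∈ admissible U w A, ‖f‖ ≤ c' := by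
  rw [AnalyticSet] at hA
  rcases hA with rfl | ⟨g, hg, rfl⟩
  · exact (h ∅ le_rfl isCompact_empty).imp fun f hf => ⟨hf.1, hf.2.trans hcc.le⟩
  by_contra hcon
  obtain ⟨b, hcb, hbc⟩ := exists_between hcc
  let Q : Set (ℕ → ℕ) → Prop := fun D => ∀ b' > b, ∃ f ∈ admissible U w (g '' D), ‖f‖ ≤ b'
  have hstep : ∀ (k : ℕ) (D : {D // ¬ Q D}), ∃ N : ℕ, ¬ Q (D.1 ∩ {α | α k ≤ N}) := by
    rintro k ⟨D, hD⟩
    by_contra! hall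
    refine hD fun b' hb' => ?_
    obtain ⟨b'', h1, h2⟩ := exists_between hb'
    have := exists_admissible_iUnion (A := fun N => g '' (D ∩ {α | α k ≤ N})) (U := U) (w := w)
      (fun N M hNM => image_mono (inter_subset_inter_right _ fun α hα => le_trans hα hNM)) h2
      (fun N => hall N b'' h1)
    rwa [← image_iUnion, ← inter_iUnion, show (⋃ N : ℕ, {α : ℕ → ℕ | α k ≤ N}) = univ from
      eq_univ_of_forall fun α => mem_iUnion.2 ⟨α k, le_refl (α k)⟩, inter_univ] at this
  choose N hN using hstep
  have h0 : ¬ Q univ := fun hQ => hcon (by simpa using hQ c' hbc)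
  let D : ℕ → {D // ¬ Q D} := fun k => Nat.rec ⟨univ, h0⟩
    (fun k D => ⟨D.1 ∩ {α | α k ≤ N k D}, hN k D⟩) k
  have hD : ∀ k, (D k).1 = {α | ∀ i < k, α i ≤ N i (D i)} := fun k => by
    induction k with
    | zero => simp [D]
    | succ k ih =>
      change (D k).1 ∩ {α | α k ≤ N k (D k)} = _
      rw [ih]
      ext α
      exact Nat.forall_lt_succ_right.symm
  have hK : IsCompact {α : ℕ → ℕ | ∀ i, α i ≤ N i (D i)} := by
    have h := isCompact_univ_pi fun i => (finite_Iic (N i (D i))).isCompact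
    convert h using 1
    ext α
    simp [Pi.le_def]
  obtain ⟨f, hf, hfc⟩ := h _ (image_subset_range g _) (hK.image hg)
  have ha : 1 < b / c := (one_lt_div hc).2 hcb
  have hopen : IsOpen (g ⁻¹' {x | 1 < potential U w (fun j => b / c * f j) x}) :=
    ((lowerSemicontinuous_potential hU _).isOpen_preimage 1).preimage hg
  obtain ⟨k, hk⟩ := exists_forall_lt_le_subset_of_isOpen hopen fun α hα => by
    change 1 < potential U w (fun j => b / c * f j) (g α)
    rw [potential_smul (by positivity)]
    calc (1 : ℝ≥0∞) < ENNReal.ofReal (b / c) := by simpa using ha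
      _ = ENNReal.ofReal (b / c) * 1 := (mul_one _).symm
      _ ≤ _ := by
        gcongr
        exact hf.2 _ (mem_image_of_mem g hα)
  refine (D k).2 fun b' hb' => ⟨(b / c) • f, ⟨fun j => ?_, ?_⟩, ?_⟩
  · exact mul_nonneg (by positivity) (hf.1 j)
  · rw [hD]
    rintro _ ⟨α, hα, rfl⟩
    exact (hk hα).le
  · rw [norm_smul, Real.norm_of_nonneg (by positivity)]
    calc b / c * ‖f‖ ≤ b / c * c := by gcongr
      _ = b := by field_simp
      _ ≤ b' := hb'.le

lemma lowerSemicontinuous_probabilityMeasure_apply {Y : Type*} [MetricSpace Y] [MeasurableSpace Y]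
    [BorelSpace Y] {V : Set Y} (hV : IsOpen V) :
    LowerSemicontinuous fun ν : ProbabilityMeasure Y => (ν : Measure Y) V := fun _ =>
  lowerSemicontinuousAt_iff_le_liminf.2
    (ProbabilityMeasure.le_liminf_measure_open_of_tendsto tendsto_id hV)

/-- Duality for finitely many constraints. -/
lemma exists_probabilityMeasure_sum_le_or_exists_admissible {Y : Type*} [MeasurableSpace Y]
    [Nonempty Y] {V : ι → Set Y} (hV : ∀ j, MeasurableSet (V j)) (J : Finset ι) {c : ℝ}
    (hc : 0 < c) :
    (∃ ν : ProbabilityMeasure Y, ∑ j ∈ J, ((w j : ℝ≥0∞) * (ν : Measure Y) (V j)) ^ 2 ≤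
      ENNReal.ofReal (c⁻¹ ^ 2)) ∨ ∃ f ∈ admissible V w (univ : Set Y), ‖f‖ ≤ c := by
  classical
  let H : Set (lp (fun _ : ι => ℝ) 2) := {v | ∃ ν : ProbabilityMeasure Y,
    ∀ j, v j = if j ∈ J then w j * ((ν : Measure Y).real (V j)) else 0}
  have hmem : ∀ ν : ProbabilityMeasure Y,
      ∃ v ∈ H, ∀ j, v j = if j ∈ J then w j * ((ν : Measure Y).real (V j)) else 0 := fun ν => by
    have hm : Memℓp (fun j => if j ∈ J then (w j : ℝ) * ((ν : Measure Y).real (V j)) else 0) 2 := by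
      refine memℓp_gen ?_
      refine summable_of_ne_finset_zero (s := J) fun j hj => ?_
      simp [hj]
    exact ⟨⟨_, hm⟩, ⟨ν, fun j => rfl⟩, fun j => rfl⟩
  have hHconv : Convex ℝ H := by
    rintro v ⟨ν, hν⟩ v' ⟨ν', hν'⟩ a b ha hb hab
    have hprob : IsProbabilityMeasure (ENNReal.ofReal a • (ν : Measure Y) +
        ENNReal.ofReal b • (ν' : Measure Y)) := ⟨by
      simp [← ENNReal.ofReal_add ha hb, hab]⟩
    refine ⟨⟨_, hprob⟩, fun j => ?_⟩
    simp only [lp.coeFn_add, lp.coeFn_smul, Pi.add_apply, Pi.smul_apply, smul_eq_mul, hν, hν',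
      ProbabilityMeasure.coe_mk]
    split_ifs
    · rw [measureReal_add_apply (ENNReal.mul_ne_top ENNReal.ofReal_ne_top (measure_ne_top _ _))
        (ENNReal.mul_ne_top ENNReal.ofReal_ne_top (measure_ne_top _ _)),
        measureReal_ennreal_smul_apply, measureReal_ennreal_smul_apply,
        ENNReal.toReal_ofReal ha, ENNReal.toReal_ofReal hb]
      ring
    · simp
  obtain ⟨y₀⟩ := ‹Nonempty Y›
  let δ : Y → ProbabilityMeasure Y := fun y => ⟨Measure.dirac y, inferInstance⟩
  have hHne : (closure H).Nonempty := let ⟨v, hv, _⟩ := hmem (δ y₀); ⟨v, subset_closure hv⟩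
  obtain ⟨p, hp, hmin⟩ := exists_mem_forall_norm_sq_le_inner isClosed_closure hHconv.closure hHne
  rcases lt_or_ge ‖p‖ c⁻¹ with hlt | hge
  · left
    obtain ⟨v, ⟨ν, hν⟩, hvp⟩ := Metric.mem_closure_iff.1 hp (c⁻¹ - ‖p‖) (sub_pos.2 hlt)
    have hvn : ‖v‖ ≤ c⁻¹ := by
      have := norm_le_norm_add_norm_sub p v
      rw [← dist_eq_norm] at this
      linarith
    refine ⟨ν, ?_⟩
    have h1 : ‖v‖ ^ 2 = ∑ j ∈ J, (w j * (ν : Measure Y).real (V j)) ^ 2 := by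
      rw [← real_inner_self_eq_norm_sq, lp.inner_eq_tsum, tsum_eq_sum (s := J)]
      · refine Finset.sum_congr rfl fun j hj => ?_
        simp [hν, hj, pow_two]
      · intro j hj
        simp [hν, hj]
    have h2 : ∑ j ∈ J, ((w j : ℝ≥0∞) * (ν : Measure Y) (V j)) ^ 2 =
        ENNReal.ofReal (∑ j ∈ J, (w j * (ν : Measure Y).real (V j)) ^ 2) := by
      rw [ENNReal.ofReal_sum_of_nonneg fun j _ => sq_nonneg _]
      refine Finset.sum_congr rfl fun j _ => ?_
      rw [ENNReal.ofReal_pow (by positivity), ENNReal.ofReal_mul (by positivity),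
        ENNReal.ofReal_coe_nnreal, ofReal_measureReal]
    rw [h2, ← h1]
    gcongr
  · right
    have hp0 : 0 < ‖p‖ := (inv_pos.2 hc).trans_le hge
    have hpos : ∀ q ∈ closure H, ∀ j, 0 ≤ q j := fun q hq j => by
      have hcl : IsClosed {q : lp (fun _ : ι => ℝ) 2 | 0 ≤ q j} :=
        isClosed_le continuous_const (lp.evalCLM ℝ (fun _ : ι => ℝ) 2 j).continuous
      refine closure_minimal ?_ hcl hq
      rintro q ⟨ν, hν⟩
      change 0 ≤ q j
      rw [hν]
      positivity
    refine ⟨(‖p‖ ^ 2)⁻¹ • p, ⟨fun j => mul_nonneg (by positivity) (hpos p hp j), ?_⟩, ?_⟩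
    · intro y _
      obtain ⟨v, hv, hvj⟩ := hmem (δ y)
      have h1 := hmin v (subset_closure hv)
      have h2 : ⟪p, v⟫ = ∑ j ∈ J, p j * v j := by
        rw [lp.inner_eq_tsum, tsum_eq_sum (s := J)]
        · refine Finset.sum_congr rfl fun j hj => ?_
          simp [mul_comm]
        · intro j hj
          simp [hvj, hj]
      have h3 : ENNReal.ofReal ⟪p, v⟫ ≤ potential V w p y := by
        rw [h2, ENNReal.ofReal_sum_of_nonneg fun j _ =>
          mul_nonneg (hpos p hp j) (hpos v (subset_closure hv) j)]
        refine le_trans (Finset.sum_le_sum fun j hj => ?_) (ENNReal.sum_le_tsum J)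
        rw [hvj, if_pos hj]
        change ENNReal.ofReal (p j * (w j * (Measure.dirac y).real (V j))) ≤ _
        rw [Measure.real, Measure.dirac_apply' y (hV j)]
        by_cases hy : y ∈ V j
        · simp [hy, mul_comm]
        · simp [hy]
      change 1 ≤ potential V w (fun j => (‖p‖ ^ 2)⁻¹ * p j) y
      rw [potential_smul (by positivity)]
      calc (1 : ℝ≥0∞) = ENNReal.ofReal ((‖p‖ ^ 2)⁻¹ * ‖p‖ ^ 2) := by
            rw [inv_mul_cancel₀ (by positivity), ENNReal.ofReal_one]
        _ ≤ ENNReal.ofReal ((‖p‖ ^ 2)⁻¹ * ⟪p, v⟫) := by gcongr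
        _ = ENNReal.ofReal (‖p‖ ^ 2)⁻¹ * ENNReal.ofReal ⟪p, v⟫ :=
            ENNReal.ofReal_mul (by positivity)
        _ ≤ _ := by gcongr
    · rw [norm_smul, Real.norm_of_nonneg (by positivity)]
      calc (‖p‖ ^ 2)⁻¹ * ‖p‖ = ‖p‖⁻¹ := by field_simp
        _ ≤ c := inv_le_of_inv_le₀ hc hge

lemma exists_measure_tsum_le_or_exists_admissible [MetricSpace X] [MeasurableSpace X]
    [BorelSpace X] (hU : ∀ j, IsOpen (U j)) {K : Set X} (hK : IsCompact K) {c : ℝ} (hc : 0 < c) :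
    (∃ ν : Measure X, IsProbabilityMeasure ν ∧ ν Kᶜ = 0 ∧
      ∑' j, ((w j : ℝ≥0∞) * ν (U j)) ^ 2 ≤ ENNReal.ofReal (c⁻¹ ^ 2)) ∨
      ∃ f ∈ admissible U w K, ‖f‖ ≤ c := by
  classical
  rcases K.eq_empty_or_nonempty with rfl | hne
  · exact Or.inr ⟨0, ⟨fun j => le_rfl, by simp⟩, by simpa using hc.le⟩
  refine or_iff_not_imp_right.2 fun hno => ?_
  have : Nonempty K := hne.to_subtype
  have : CompactSpace K := isCompact_iff_compactSpace.1 hK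
  let V : ι → Set K := fun j => Subtype.val ⁻¹' U j
  have hV : ∀ j, IsOpen (V j) := fun j => (hU j).preimage continuous_subtype_val
  have hno' : ¬ ∃ f ∈ admissible V w (univ : Set K), ‖f‖ ≤ c := by
    rintro ⟨f, hf, hfc⟩
    exact hno ⟨f, ⟨hf.1, fun x hx => hf.2 ⟨x, hx⟩ (mem_univ _)⟩, hfc⟩
  let S : Finset ι → Set (ProbabilityMeasure K) := fun J =>
    {ν | ∑ j ∈ J, ((w j : ℝ≥0∞) * (ν : Measure K) (V j)) ^ 2 ≤ ENNReal.ofReal (c⁻¹ ^ 2)}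
  have hSne : ∀ J, (S J).Nonempty := fun J =>
    (exists_probabilityMeasure_sum_le_or_exists_admissible
      (fun j => (hV j).measurableSet) J hc).resolve_right hno'
  have hScl : ∀ J, IsClosed (S J) := fun J => by
    have hlsc : LowerSemicontinuous fun ν : ProbabilityMeasure K =>
        ∑ j ∈ J, ((w j : ℝ≥0∞) * (ν : Measure K) (V j)) ^ 2 := by
      refine lowerSemicontinuous_sum fun j _ => ?_
      have hcont : Continuous fun t : ℝ≥0∞ => ((w j : ℝ≥0∞) * t) ^ 2 :=
        (ENNReal.continuous_pow 2).comp (ENNReal.continuous_const_mul ENNReal.coe_ne_top)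
      refine hcont.comp_lowerSemicontinuous (lowerSemicontinuous_probabilityMeasure_apply (hV j)) ?_
      intro a b hab
      dsimp only
      gcongr
    exact hlsc.isClosed_preimage _
  have hdir : Directed (· ⊇ ·) S := by
    refine directed_of_isDirected_le fun J J' hJ ν hν => ?_
    exact (Finset.sum_le_sum_of_subset hJ).trans (mem_ofPred.1 hν)
  obtain ⟨ν, hν⟩ := IsCompact.nonempty_iInter_of_directed_nonempty_isCompact_isClosed S hdir hSne
    (fun J => (hScl J).isCompact) hScl
  have hmeas : Measurable (Subtype.val : K → X) := measurable_subtype_coe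
  refine ⟨(ν : Measure K).map Subtype.val,
    Measure.isProbabilityMeasure_map hmeas.aemeasurable, ?_, ?_⟩
  · rw [Measure.map_apply hmeas hK.measurableSet.compl]
    convert measure_empty (μ := (ν : Measure K))
    ext x
    simp
  · rw [ENNReal.tsum_eq_iSup_sum]
    refine iSup_le fun J => ?_
    refine le_trans (le_of_eq ?_) (mem_iInter.1 hν J)
    refine Finset.sum_congr rfl fun j _ => ?_
    rw [Measure.map_apply hmeas (hU j).measurableSet]

/-- A Borel set either carries a measure of finite energy or has zero capacity. -/
theorem exists_measure_tsum_lt_top_of_not_admissible [MetricSpace X] [MeasurableSpace X]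
    [BorelSpace X] (hU : ∀ j, IsOpen (U j)) {A : Set X} (hA : AnalyticSet A) {c : ℝ} (hc : 0 < c)
    (h : ¬ ∃ f ∈ admissible U w A, ‖f‖ ≤ c) :
    ∃ K ⊆ A, IsCompact K ∧ ∃ ν : Measure X, IsProbabilityMeasure ν ∧ ν Kᶜ = 0 ∧
      ∑' j, ((w j : ℝ≥0∞) * ν (U j)) ^ 2 < ∞ := by
  by_contra! hno
  refine h (exists_admissible_of_forall_isCompact hU hA (half_pos hc) (half_lt_self hc) ?_)
  intro K hKA hK
  refine (exists_measure_tsum_le_or_exists_admissible hU hK (half_pos hc)).resolve_left ?_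
  rintro ⟨ν, h1, h2, h3⟩
  have := hno K hKA hK ν h1 h2
  exact absurd (this.trans h3) (by simp)

end Capacity

section Energy

/-- The open cube with centre `2⁻ᵏ z` and side length `4 * 2⁻ᵏ`. -/
def gridCube {n : ℕ} (j : ℕ × (Fin n → ℤ)) : Set (EuclideanSpace ℝ (Fin n)) :=
  {x | ∀ i, |2 ^ j.1 * x i - j.2 i| < 2}

variable {n : ℕ}

lemma isOpen_gridCube (j : ℕ × (Fin n → ℤ)) : IsOpen (gridCube j) := by
  simp only [gridCube, ofPred_forall]
  exact isOpen_iInter_of_finite fun i => isOpen_lt (by fun_prop) continuous_const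

lemma ediam_gridCube_le (j : ℕ × (Fin n → ℤ)) :
    ediam (gridCube j) ≤ ((Fintype.card (Fin n) : ℝ≥0) ^ (1 / (2 : ℝ≥0∞)).toReal * 4 : ℝ≥0) *
      ((2 : ℝ≥0∞) ^ j.1)⁻¹ := by
  refine ediam_le fun x hx y hy => ?_
  refine (PiLp.antilipschitzWith_ofLp 2 (fun _ : Fin n => ℝ) x y).trans ?_
  rw [ENNReal.coe_mul, mul_assoc]
  gcongr
  refine edist_pi_le_iff.2 fun i => ?_
  rw [edist_dist]
  refine ENNReal.ofReal_le_of_le_toReal ?_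
  have h1 := abs_lt.1 (hx i)
  have h2 := abs_lt.1 (hy i)
  have hk : (0 : ℝ) < 2 ^ j.1 := by positivity
  have h3 : |x i - y i| * 2 ^ j.1 ≤ 4 := by
    calc |x i - y i| * 2 ^ j.1 = |(x i - y i) * 2 ^ j.1| := by rw [abs_mul, abs_of_pos hk]
      _ ≤ 4 := by rw [abs_le]; constructor <;> linarith
  rw [Real.dist_eq]
  simp only [ENNReal.toReal_mul, ENNReal.coe_toReal, ENNReal.toReal_inv, ENNReal.toReal_pow,
    ENNReal.toReal_ofNat, NNReal.coe_ofNat]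
  rw [← div_eq_mul_inv]
  exact (le_div_iff₀ hk).2 h3

lemma exists_mem_gridCube_of_edist_le {k : ℕ} {x y : EuclideanSpace ℝ (Fin n)}
    (h : dist x y ≤ (2 ^ k)⁻¹) : ∃ z, x ∈ gridCube (k, z) ∧ y ∈ gridCube (k, z) := by
  have hk : (0 : ℝ) < 2 ^ k := by positivity
  have hfl : ∀ i, |2 ^ k * x i - (⌊2 ^ k * x i⌋ : ℤ)| < 1 := fun i => by
    rw [← Int.fract, abs_of_nonneg (Int.fract_nonneg _)]
    exact Int.fract_lt_one _
  refine ⟨fun i => ⌊2 ^ k * x i⌋, fun i => (hfl i).trans one_lt_two, fun i => ?_⟩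
  have h1 : |x i - y i| ≤ (2 ^ k)⁻¹ := by
    refine le_trans ?_ h
    rw [dist_eq_norm]
    exact PiLp.norm_apply_le (x - y) i
  have h2 : |2 ^ k * (y i - x i)| ≤ 1 := by
    rw [abs_mul, abs_of_pos hk, abs_sub_comm]
    calc 2 ^ k * |x i - y i| ≤ 2 ^ k * (2 ^ k)⁻¹ := by gcongr
      _ = 1 := mul_inv_cancel₀ hk.ne'
  have h3 := hfl i
  rw [abs_lt] at h3 ⊢
  rw [abs_le] at h2
  dsimp only
  constructor <;> linarith

/-- Each point lies in at most `5 ^ n` of the cubes of a given generation. -/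
lemma tsum_indicator_gridCube_le (k : ℕ) (x : EuclideanSpace ℝ (Fin n)) {g : (Fin n → ℤ) → ℝ≥0∞}
    {a : ℝ≥0∞} (hg : ∀ z, x ∈ gridCube (k, z) → g z ≤ a) :
    ∑' z, (gridCube (k, z)).indicator (fun _ => g z) x ≤ 5 ^ n * a := by
  classical
  let s : Finset (Fin n → ℤ) :=
    Fintype.piFinset fun i => Finset.Icc (⌊2 ^ k * x i⌋ - 2) (⌊2 ^ k * x i⌋ + 2)
  have hs : s.card = 5 ^ n := by
    simp only [s, Fintype.card_piFinset, Int.card_Icc]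
    rw [Finset.prod_congr rfl (g := fun _ => 5) fun i _ => by omega]
    simp
  rw [tsum_eq_sum (s := s)]
  · calc _ ≤ ∑ _z ∈ s, a := Finset.sum_le_sum fun z _ => by
          by_cases hz : x ∈ gridCube (k, z)
          · simpa [hz] using hg z hz
          · simp [hz]
      _ = 5 ^ n * a := by simp [hs]
  · intro z hz
    refine indicator_of_notMem (fun hx => hz ?_) _
    refine Fintype.mem_piFinset.2 fun i => ?_
    have h1 := abs_lt.1 (hx i)
    have h2 := Int.floor_le (2 ^ k * x i)
    have h3 := Int.lt_floor_add_one (2 ^ k * x i)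
    dsimp only at h1
    rw [Finset.mem_Icc]
    constructor
    · have : ((⌊2 ^ k * x i⌋ - 2 : ℤ) : ℝ) ≤ z i := by push_cast; linarith
      exact_mod_cast this
    · have : (z i : ℝ) < ((⌊2 ^ k * x i⌋ + 3 : ℤ) : ℝ) := by push_cast; linarith
      have := Int.cast_lt.1 this
      omega

/-- The weight `2 ^ (k t / 2)` of cubes of generation `k`. -/
noncomputable def gridWeight (t : ℝ) (j : ℕ × (Fin n → ℤ)) : ℝ≥0 := ((2 : ℝ≥0) ^ (t / 2)) ^ j.1

lemma coe_gridWeight_sq {t : ℝ} (ht : 0 ≤ t) (j : ℕ × (Fin n → ℤ)) :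
    (gridWeight t j : ℝ≥0∞) ^ 2 = ((2 : ℝ≥0∞) ^ t) ^ j.1 := by
  have h2 : ((2 : ℝ≥0) ^ (t / 2)) ^ 2 = 2 ^ t := by
    rw [← NNReal.rpow_natCast, ← NNReal.rpow_mul]
    congr 1
    push_cast
    ring
  rw [gridWeight, ENNReal.coe_pow, ← pow_mul, mul_comm j.1 2, pow_mul, ← ENNReal.coe_pow, h2,
    ENNReal.coe_rpow_of_nonneg _ ht, ENNReal.coe_ofNat]

lemma edist_rpow_neg_le {t : ℝ} (ht : 0 < t) (x y : EuclideanSpace ℝ (Fin n)) :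
    edist x y ^ (-t) ≤ 1 + 2 ^ t * ∑' j : ℕ × (Fin n → ℤ), (gridWeight t j : ℝ≥0∞) ^ 2 *
      ((gridCube j).indicator 1 x * (gridCube j).indicator 1 y) := by
  set S := ∑' j : ℕ × (Fin n → ℤ), (gridWeight t j : ℝ≥0∞) ^ 2 *
      ((gridCube j).indicator 1 x * (gridCube j).indicator 1 y)
  have hS : ∀ k : ℕ, dist x y ≤ (2 ^ k)⁻¹ → ((2 : ℝ≥0∞) ^ t) ^ k ≤ S := fun k hk => by
    obtain ⟨z, hx, hy⟩ := exists_mem_gridCube_of_edist_le hk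
    refine le_trans (le_of_eq ?_) (ENNReal.le_tsum (k, z))
    simp only [hx, hy, indicator_of_mem, Pi.one_apply, mul_one]
    rw [coe_gridWeight_sq ht.le]
  rcases le_or_gt 1 (dist x y) with h1 | h1
  · refine le_trans ?_ le_self_add
    rw [ENNReal.rpow_neg]
    refine ENNReal.inv_le_one.2 (ENNReal.one_le_rpow ?_ ht)
    rw [edist_dist]
    simpa using h1
  rcases (dist_nonneg : 0 ≤ dist x y).eq_or_lt with h0 | h0
  · have : S = ∞ := by
      refine ENNReal.eq_top_of_forall_nnreal_le fun r => ?_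
      have h2 : (1 : ℝ≥0∞) < 2 ^ t := ENNReal.one_lt_rpow (by norm_num) ht
      obtain ⟨k, hk⟩ := ((ENNReal.tendsto_pow_atTop_nhds_top_iff.2 h2).eventually
        (lt_mem_nhds ENNReal.coe_lt_top)).exists
      exact hk.le.trans (hS k (by rw [← h0]; positivity))
    rw [this, ENNReal.mul_top (by positivity)]
    simp
  · obtain ⟨k, hk1, hk2⟩ := exists_nat_pow_near_of_lt_one h0 h1.le
      (show (0 : ℝ) < 2⁻¹ by norm_num) (by norm_num)
    rw [inv_pow] at hk1 hk2
    refine le_trans ?_ le_add_self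
    calc edist x y ^ (-t) ≤ (((2 : ℝ≥0∞) ^ (k + 1))⁻¹) ^ (-t) := by
          rw [ENNReal.rpow_neg, ENNReal.rpow_neg]
          refine ENNReal.inv_le_inv.2 (ENNReal.rpow_le_rpow ?_ ht.le)
          rw [edist_dist]
          refine ENNReal.le_ofReal_iff_toReal_le ?_ ?_ |>.2 ?_
          · simp
          · exact h0.le
          · simpa using hk1.le
      _ = 2 ^ t * ((2 : ℝ≥0∞) ^ t) ^ k := by
          rw [ENNReal.rpow_neg, ENNReal.inv_rpow, inv_inv, ← pow_succ', ← ENNReal.rpow_natCast,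
            ← ENNReal.rpow_natCast, ← ENNReal.rpow_mul, ← ENNReal.rpow_mul, mul_comm]
      _ ≤ 2 ^ t * S := by
          gcongr
          exact hS k hk2

lemma lintegral_edist_rpow_neg_le {t : ℝ} (ht : 0 < t) (ν : Measure (EuclideanSpace ℝ (Fin n)))
    [IsProbabilityMeasure ν] :
    ∫⁻ x, ∫⁻ y, edist x y ^ (-t) ∂ν ∂ν ≤ 1 + 2 ^ t *
      ∑' j : ℕ × (Fin n → ℤ), ((gridWeight t j : ℝ≥0∞) * ν (gridCube j)) ^ 2 := by
  have hm : ∀ j : ℕ × (Fin n → ℤ), MeasurableSet (gridCube j) := fun j =>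
    (isOpen_gridCube j).measurableSet
  have hi : ∀ j : ℕ × (Fin n → ℤ), Measurable
      ((gridCube j).indicator (1 : EuclideanSpace ℝ (Fin n) → ℝ≥0∞)) := fun j =>
    measurable_one.indicator (hm j)
  have h1 : ∀ x, ∫⁻ y, edist x y ^ (-t) ∂ν ≤ 1 + 2 ^ t * ∑' j : ℕ × (Fin n → ℤ),
      (gridWeight t j : ℝ≥0∞) ^ 2 * ((gridCube j).indicator 1 x * ν (gridCube j)) := fun x => by
    refine (lintegral_mono fun y => edist_rpow_neg_le ht x y).trans (le_of_eq ?_)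
    rw [lintegral_add_left measurable_const, lintegral_const_mul]
    · rw [lintegral_tsum fun j => (((hi j).const_mul _).const_mul _).aemeasurable]
      simp only [lintegral_const, measure_univ, mul_one]
      congr 3 with j
      rw [lintegral_const_mul _ ((hi j).const_mul _), lintegral_const_mul _ (hi j),
        lintegral_indicator_one (hm j)]
    · exact Measurable.tsum fun j => ((hi j).const_mul _).const_mul _
  refine (lintegral_mono h1).trans (le_of_eq ?_)
  rw [lintegral_add_left measurable_const, lintegral_const_mul]
  · rw [lintegral_tsum fun j => (((hi j).mul_const _).const_mul _).aemeasurable]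
    simp only [lintegral_const, measure_univ, mul_one]
    congr 3 with j
    rw [lintegral_const_mul _ ((hi j).mul_const _), lintegral_mul_const _ (hi j),
      lintegral_indicator_one (hm j)]
    ring
  · exact Measurable.tsum fun j => ((hi j).mul_const _).const_mul _

end Energy

section Frostman

variable {n : ℕ}

lemma exists_gridCube_of_one_le_potential {t η : ℝ} (ht : 0 < t) (hη : 0 < η) :
    ∃ C : ℝ≥0∞, C ≠ ∞ ∧ ∀ (f : ℕ × (Fin n → ℤ) → ℝ) (x : EuclideanSpace ℝ (Fin n)),
      1 ≤ potential gridCube (gridWeight t) f x →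
        ∃ j, x ∈ gridCube j ∧ ediam (gridCube j) ^ (t + 2 * η) ≤ C * ENNReal.ofReal (f j) ^ 2 := by
  set q : ℝ≥0∞ := 2 ^ (-η) with hq
  have hq1 : q < 1 := by
    rw [hq, ENNReal.rpow_neg, ENNReal.inv_lt_one]
    exact ENNReal.one_lt_rpow (by norm_num) hη
  set κ : ℝ≥0∞ := (1 - q) * (2 * 5 ^ n)⁻¹ with hκ
  have hq1' : 1 - q ≠ 0 := (tsub_pos_of_lt hq1).ne'
  have hq1t : 1 - q ≠ ∞ := ENNReal.sub_ne_top (by simp)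
  have hκ0 : κ ≠ 0 := mul_ne_zero hq1' (by simp [ENNReal.mul_eq_top])
  have hκt : κ ≠ ∞ := ENNReal.mul_ne_top hq1t (by simp)
  set D : ℝ≥0 := (Fintype.card (Fin n) : ℝ≥0) ^ (1 / (2 : ℝ≥0∞)).toReal * 4
  have ht' : 0 ≤ t + 2 * η := by positivity
  refine ⟨(D : ℝ≥0∞) ^ (t + 2 * η) * (κ⁻¹) ^ 2, ENNReal.mul_ne_top
    (ENNReal.rpow_ne_top_of_nonneg ht' (by simp)) (by simpa), fun f x hx => ?_⟩
  have hex : ∃ j, x ∈ gridCube j ∧ κ * q ^ j.1 < gridWeight t j * ENNReal.ofReal (f j) := by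
    by_contra! hcon
    have h1 : potential gridCube (gridWeight t) f x ≤ 2⁻¹ := by
      rw [potential, ENNReal.tsum_prod']
      calc _ ≤ ∑' k : ℕ, 5 ^ n * (κ * q ^ k) := ENNReal.tsum_le_tsum fun k =>
            tsum_indicator_gridCube_le k x
              (g := fun z => gridWeight t (k, z) * ENNReal.ofReal (f (k, z)))
              fun z hz => hcon (k, z) hz
        _ = 5 ^ n * (κ * (1 - q)⁻¹) := by
            rw [ENNReal.tsum_mul_left, ENNReal.tsum_mul_left, ENNReal.tsum_geometric]
        _ = 2⁻¹ := by
            rw [hκ, ENNReal.mul_inv (by simp) (by simp)]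
            calc _ = ((5 : ℝ≥0∞) ^ n * (5 ^ n)⁻¹) * ((1 - q) * (1 - q)⁻¹) * 2⁻¹ := by ring
              _ = 2⁻¹ := by
                rw [ENNReal.mul_inv_cancel (by simp) (by simp), ENNReal.mul_inv_cancel hq1' hq1t,
                  one_mul, one_mul]
    exact absurd (hx.trans h1) (by simp)
  obtain ⟨j, hj, hlt⟩ := hex
  refine ⟨j, hj, ?_⟩
  set F := ENNReal.ofReal (f j)
  have hb0 : ((2 : ℝ≥0∞) ^ t) ^ j.1 ≠ 0 := by positivity
  have hbt : ((2 : ℝ≥0∞) ^ t) ^ j.1 ≠ ∞ :=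
    ENNReal.pow_ne_top (ENNReal.rpow_ne_top_of_nonneg ht.le (by simp))
  have hk : (((2 : ℝ≥0∞) ^ j.1)⁻¹) ^ (t + 2 * η) = (((2 : ℝ≥0∞) ^ t) ^ j.1)⁻¹ * (q ^ j.1) ^ 2 := by
    rw [hq, ← ENNReal.rpow_natCast, ← ENNReal.rpow_natCast, ← ENNReal.rpow_natCast,
      ← ENNReal.rpow_natCast, ← ENNReal.rpow_neg, ← ENNReal.rpow_mul, ← ENNReal.rpow_mul,
      ← ENNReal.rpow_mul, ← ENNReal.rpow_mul, ← ENNReal.rpow_neg,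
      ← ENNReal.rpow_add _ _ (by simp) (by simp)]
    congr 1
    push_cast
    ring
  calc ediam (gridCube j) ^ (t + 2 * η)
      ≤ ((D : ℝ≥0∞) * ((2 : ℝ≥0∞) ^ j.1)⁻¹) ^ (t + 2 * η) :=
        ENNReal.rpow_le_rpow (ediam_gridCube_le j) ht'
    _ = (D : ℝ≥0∞) ^ (t + 2 * η) * (κ⁻¹) ^ 2 *
          ((((2 : ℝ≥0∞) ^ t) ^ j.1)⁻¹ * (κ * q ^ j.1) ^ 2) := by
        rw [ENNReal.mul_rpow_of_nonneg _ _ ht', hk]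
        calc _ = (D : ℝ≥0∞) ^ (t + 2 * η) * ((((2 : ℝ≥0∞) ^ t) ^ j.1)⁻¹ * (q ^ j.1) ^ 2) *
                (κ⁻¹ * κ) ^ 2 := by rw [ENNReal.inv_mul_cancel hκ0 hκt]; ring
          _ = _ := by ring
    _ ≤ (D : ℝ≥0∞) ^ (t + 2 * η) * (κ⁻¹) ^ 2 *
          ((((2 : ℝ≥0∞) ^ t) ^ j.1)⁻¹ * (gridWeight t j * F) ^ 2) := by gcongr
    _ = _ := by
        rw [mul_pow, coe_gridWeight_sq ht.le, ← mul_assoc (_⁻¹), ENNReal.inv_mul_cancel hb0 hbt,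
          one_mul]

lemma lp_tsum_ofReal_sq {ι : Type*} (f : lp (fun _ : ι => ℝ) 2) (hf : ∀ j, 0 ≤ f j) :
    ∑' j, ENNReal.ofReal (f j) ^ 2 = ENNReal.ofReal (‖f‖ ^ 2) := by
  have h := lp.hasSum_norm (p := 2) (by norm_num) f
  simp only [ENNReal.toReal_ofNat, Real.rpow_ofNat] at h
  rw [← h.tsum_eq, ENNReal.ofReal_tsum_of_nonneg (fun j => by positivity) h.summable]
  refine tsum_congr fun j => ?_
  rw [Real.norm_of_nonneg (hf j), ENNReal.ofReal_pow (hf j)]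

/-- A Borel set of dimension larger than `t` carries a probability measure of finite `t`-energy
with compact support. -/
theorem exists_measure_energy_lt_top {A : Set (EuclideanSpace ℝ (Fin n))} (hA : MeasurableSet A)
    {t : ℝ} (ht : 0 < t) (h : ENNReal.ofReal t < dimH A) :
    ∃ K ⊆ A, IsCompact K ∧ ∃ ν : Measure (EuclideanSpace ℝ (Fin n)), IsProbabilityMeasure ν ∧
      ν Kᶜ = 0 ∧ ∫⁻ x, ∫⁻ y, edist x y ^ (-t) ∂ν ∂ν < ∞ := by
  obtain ⟨t', h1, h2⟩ := ENNReal.lt_iff_exists_nnreal_btwn.1 h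
  have htt' : t < t' := by
    rwa [← ENNReal.ofReal_coe_nnreal, ENNReal.ofReal_lt_ofReal_iff_of_nonneg ht.le] at h1
  have ht'0 : (0 : ℝ) < t' := ht.trans htt'
  obtain ⟨C, hC, hcov⟩ := exists_gridCube_of_one_le_potential (n := n) ht
    (show 0 < (t' - t) / 2 by linarith)
  rw [show t + 2 * ((t' - t) / 2) = t' by ring] at hcov
  have key : ∃ c : ℝ, 0 < c ∧
      ¬ ∃ f ∈ admissible (gridCube (n := n)) (gridWeight t) A, ‖f‖ ≤ c := by
    by_contra! hcon
    choose f hf hfc using fun N : ℕ => hcon (1 / ((N : ℝ) + 1)) Nat.one_div_pos_of_nat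
    let a : ℕ → ℝ≥0∞ := fun N => C * ENNReal.ofReal ((1 / ((N : ℝ) + 1)) ^ 2)
    have ha : Tendsto a atTop (𝓝 0) := by
      have h3 : Tendsto (fun N : ℕ => (1 / ((N : ℝ) + 1)) ^ 2) atTop (𝓝 (0 ^ 2)) :=
        tendsto_one_div_add_atTop_nhds_zero_nat.pow 2
      have h4 := ENNReal.Tendsto.const_mul (a := C) (ENNReal.tendsto_ofReal h3) (Or.inr hC)
      simpa [a] using h4
    let good : ℕ → Set (ℕ × (Fin n → ℤ)) := fun N =>
      {j | ediam (gridCube j) ^ (t' : ℝ) ≤ C * ENNReal.ofReal (f N j) ^ 2}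
    have hsum : ∀ N, ∑' j : good N, ediam (gridCube j.1) ^ (t' : ℝ) ≤ a N := fun N =>
      calc _ ≤ ∑' j : good N, C * ENNReal.ofReal (f N j) ^ 2 :=
            ENNReal.tsum_le_tsum fun j => j.2
        _ ≤ ∑' j, C * ENNReal.ofReal (f N j) ^ 2 :=
            ENNReal.tsum_comp_le_tsum_of_injective Subtype.val_injective
              (fun j => C * ENNReal.ofReal (f N j) ^ 2)
        _ = C * ENNReal.ofReal (‖f N‖ ^ 2) := by
            rw [ENNReal.tsum_mul_left, lp_tsum_ofReal_sq _ (hf N).1]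
        _ ≤ a N := by
            dsimp only [a]
            gcongr
            exact hfc N
    have hle := Measure.hausdorffMeasure_le_liminf_tsum (ι := fun N => good N) (t' : ℝ) A
      (l := atTop) (fun N => a N ^ (t' : ℝ)⁻¹) (by
        have := (ENNReal.continuous_rpow_const (y := (t' : ℝ)⁻¹)).tendsto 0 |>.comp ha
        rwa [ENNReal.zero_rpow_of_pos (inv_pos.2 ht'0)] at this)
      (fun N j => gridCube j.1)
      (Eventually.of_forall fun N j => by
        rw [ENNReal.le_rpow_inv_iff ht'0]
        exact (ENNReal.le_tsum j).trans (hsum N))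
      (Eventually.of_forall fun N x hx => by
        obtain ⟨j, hj, hj'⟩ := hcov (f N) x ((hf N).2 x hx)
        exact mem_iUnion.2 ⟨⟨j, hj'⟩, hj⟩)
    have hz : liminf (fun N => ∑' j : good N, ediam (gridCube j.1) ^ (t' : ℝ)) atTop = 0 :=
      (tendsto_of_tendsto_of_tendsto_of_le_of_le tendsto_const_nhds ha
        (fun N => zero_le) hsum).liminf_eq
    rw [hz, hausdorffMeasure_of_lt_dimH h2] at hle
    exact absurd hle (by simp)
  obtain ⟨c, hc, hno⟩ := key
  obtain ⟨K, hKA, hK, ν, hν, hνK, hfin⟩ := exists_measure_tsum_lt_top_of_not_admissible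
    (fun j => isOpen_gridCube j) hA.analyticSet hc hno
  refine ⟨K, hKA, hK, ν, hν, hνK, (lintegral_edist_rpow_neg_le ht ν).trans_lt ?_⟩
  exact ENNReal.add_lt_top.2 ⟨ENNReal.one_lt_top,
    ENNReal.mul_lt_top (ENNReal.rpow_lt_top_of_nonneg ht.le (by simp)) hfin⟩

end Frostman

section Shear

variable {m : ℕ} {E : Type*} [NormedAddCommGroup E] [NormedSpace ℝ E]
  (π : E →L[ℝ] (Fin m → ℝ)) (τ : E →L[ℝ] ℝ)

/-- The projection `x ↦ π x - τ x • θ`, whose fibres are the lines in direction `(θ, 1)`. -/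
def shear (θ : Fin m → ℝ) (x : E) : Fin m → ℝ := π x - τ x • θ

/-- The closed tube of radius `r` around the line `{u | shear π τ p.2 u = p.1}`. -/
def tube (r : ℝ) (p : (Fin m → ℝ) × (Fin m → ℝ)) : Set E := {u | ‖shear π τ p.2 u - p.1‖ ≤ r}

/-- Lebesgue measure on `(z, θ)`, with `θ` restricted to a ball. -/
noncomputable def lineMeasure (m : ℕ) (R : ℝ) : Measure ((Fin m → ℝ) × (Fin m → ℝ)) :=
  volume.prod (volume.restrict (closedBall 0 R))

instance (m : ℕ) (R : ℝ) : SFinite (lineMeasure m R) := by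
  unfold lineMeasure; infer_instance

instance (m : ℕ) (R : ℝ) : SigmaFinite (lineMeasure m R) := by
  unfold lineMeasure; infer_instance

instance (m : ℕ) (R : ℝ) : IsLocallyFiniteMeasure (lineMeasure m R) := by
  unfold lineMeasure; infer_instance

instance (m : ℕ) (R : ℝ) : (lineMeasure m R).WeaklyRegular := by
  infer_instance

lemma shear_sub (θ : Fin m → ℝ) (x y : E) :
    shear π τ θ (x - y) = shear π τ θ x - shear π τ θ y := by
  simp only [shear, map_sub, sub_smul]
  abel

lemma continuous_shear : Continuous fun p : (Fin m → ℝ) × E => shear π τ p.1 p.2 := by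
  unfold shear; fun_prop

variable {π τ}

lemma volume_norm_shear_le {D R δ : ℝ} (hm : 0 < m) (hD : 0 < D) (hR : 0 < R) (hδ : 0 < δ)
    (hπτ : ∀ w, ‖w‖ ≤ D * max ‖π w‖ |τ w|) (w : E) :
    volume {θ ∈ closedBall (0 : Fin m → ℝ) R | ‖shear π τ θ w‖ ≤ δ} ≤
      ENNReal.ofReal ((4 * D * (R + 1)) ^ m) * ENNReal.ofReal (δ ^ m) * ‖w‖ₑ ^ (-(m : ℝ)) := by
  rcases eq_or_ne w 0 with rfl | hw
  · rw [enorm_zero, ENNReal.zero_rpow_of_neg (by simpa using hm), ENNReal.mul_top]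
    · exact le_top
    · rw [← ENNReal.ofReal_mul (by positivity)]
      simp only [ne_eq, ENNReal.ofReal_eq_zero, not_le]
      positivity
  have hw0 : 0 < ‖w‖ := norm_pos_iff.2 hw
  have hrhs : ENNReal.ofReal ((4 * D * (R + 1)) ^ m) * ENNReal.ofReal (δ ^ m) * ‖w‖ₑ ^ (-(m : ℝ)) =
      ENNReal.ofReal ((4 * D * (R + 1) * δ / ‖w‖) ^ m) := by
    rw [← ofReal_norm, ENNReal.ofReal_rpow_of_pos hw0,
      ← ENNReal.ofReal_mul (by positivity), ← ENNReal.ofReal_mul (by positivity),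
      Real.rpow_neg hw0.le, Real.rpow_natCast]
    congr 1
    rw [div_pow, mul_pow _ δ, div_eq_mul_inv]
  rw [hrhs]
  rcases le_or_gt ‖w‖ (2 * D * (R + 1) * |τ w|) with h | h
  · have hτ : 0 < |τ w| := by
      by_contra! h0
      have : |τ w| = 0 := le_antisymm h0 (abs_nonneg _)
      rw [this] at h
      linarith
    have hsub : {θ ∈ closedBall (0 : Fin m → ℝ) R | ‖shear π τ θ w‖ ≤ δ} ⊆
        closedBall ((τ w)⁻¹ • π w) (δ / |τ w|) := by
      rintro θ ⟨-, hθ⟩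
      rw [mem_closedBall, dist_eq_norm, le_div_iff₀ hτ, ← Real.norm_eq_abs, mul_comm, ← norm_smul,
        smul_sub, smul_inv_smul₀ (abs_pos.1 hτ), norm_sub_rev]
      exact hθ
    refine (measure_mono hsub).trans ?_
    rw [Real.volume_pi_closedBall _ (by positivity), Fintype.card_fin]
    gcongr
    rw [← mul_div_assoc, div_le_div_iff₀ hτ hw0]
    nlinarith
  · rcases le_or_gt ‖w‖ (2 * D * δ) with h' | h'
    · refine (measure_mono (sep_subset _ _)).trans ?_
      rw [Real.volume_pi_closedBall _ hR.le, Fintype.card_fin]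
      gcongr
      rw [le_div_iff₀ hw0]
      nlinarith
    · refine le_of_eq_of_le ?_ zero_le
      refine measure_mono_null (t := ∅) ?_ measure_empty
      rintro θ ⟨hθ, hθ'⟩
      rw [mem_closedBall_zero_iff] at hθ
      have h1 : ‖π w‖ ≤ ‖shear π τ θ w‖ + |τ w| * ‖θ‖ := by
        rw [← Real.norm_eq_abs, ← norm_smul]
        simpa [shear] using norm_add_le (shear π τ θ w) (τ w • θ)
      have h2 : |τ w| * ‖θ‖ ≤ |τ w| * R := by gcongr
      rcases max_cases ‖π w‖ |τ w| with ⟨h3, -⟩ | ⟨h3, -⟩ <;> have h4 := hπτ w <;> rw [h3] at h4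
      · have := abs_nonneg (τ w)
        nlinarith
      · have := abs_nonneg (τ w)
        nlinarith [mul_nonneg hD.le this, mul_nonneg (mul_nonneg hD.le this) hR.le]

variable (π τ) in
/-- The pairs of points lying in a common tube. -/
def tubePairs (r : ℝ) : Set (((Fin m → ℝ) × (Fin m → ℝ)) × (E × E)) :=
  {x | x.2.1 ∈ tube π τ r x.1 ∧ x.2.2 ∈ tube π τ r x.1}

lemma continuous_norm_shear_sub :
    Continuous fun x : ((Fin m → ℝ) × (Fin m → ℝ)) × E => ‖shear π τ x.1.2 x.2 - x.1.1‖ := by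
  unfold shear; fun_prop

lemma isClosed_tube (r : ℝ) (p : (Fin m → ℝ) × (Fin m → ℝ)) : IsClosed (tube π τ r p) :=
  isClosed_Iic.preimage (continuous_norm_shear_sub.comp (Continuous.prodMk_right p))

lemma isClosed_setOf_mem_tube (r : ℝ) :
    IsClosed {x : ((Fin m → ℝ) × (Fin m → ℝ)) × E | x.2 ∈ tube π τ r x.1} :=
  isClosed_Iic.preimage continuous_norm_shear_sub

lemma isClosed_tubePairs (r : ℝ) : IsClosed (tubePairs π τ r) := by
  have h1 : Continuous fun x : ((Fin m → ℝ) × (Fin m → ℝ)) × (E × E) => (x.1, x.2.1) := by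
    fun_prop
  have h2 : Continuous fun x : ((Fin m → ℝ) × (Fin m → ℝ)) × (E × E) => (x.1, x.2.2) := by
    fun_prop
  exact ((isClosed_setOf_mem_tube r).preimage h1).inter ((isClosed_setOf_mem_tube r).preimage h2)

variable [MeasurableSpace E] [BorelSpace E]

lemma setLIntegral_tube_prod_eq (Q : Measure (E × E)) (W : E × E → ℝ≥0∞) (r : ℝ)
    (p : (Fin m → ℝ) × (Fin m → ℝ)) :
    ∫⁻ q in tube π τ r p ×ˢ tube π τ r p, W q ∂Q =
      ∫⁻ q, (tubePairs π τ r).indicator (fun x => W x.2) (p, q) ∂Q := by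
  rw [← lintegral_indicator ((isClosed_tube r p).measurableSet.prod
    (isClosed_tube r p).measurableSet)]
  rfl

variable [SecondCountableTopology E]

lemma measurable_measure_tube (μ : Measure E) [SFinite μ] (r : ℝ) :
    Measurable fun p => μ (tube π τ r p) :=
  measurable_measure_prodMk_left (isClosed_setOf_mem_tube r).measurableSet

lemma measurable_indicator_tubePairs {W : E × E → ℝ≥0∞} (hW : Measurable W) (r : ℝ) :
    Measurable ((tubePairs π τ r).indicator fun x => W x.2) :=
  (hW.comp measurable_snd).indicator (isClosed_tubePairs r).measurableSet

lemma measurable_setLIntegral_tube (Q : Measure (E × E)) [SFinite Q] {W : E × E → ℝ≥0∞}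
    (hW : Measurable W) (r : ℝ) :
    Measurable fun p => ∫⁻ q in tube π τ r p ×ˢ tube π τ r p, W q ∂Q := by
  simp_rw [setLIntegral_tube_prod_eq]
  exact (measurable_indicator_tubePairs hW r).lintegral_prod_right'

lemma lintegral_setLIntegral_tube_le {D R r : ℝ} (hm : 0 < m) (hD : 0 < D) (hR : 0 < R)
    (hr : 0 < r) (hπτ : ∀ w, ‖w‖ ≤ D * max ‖π w‖ |τ w|) (Q : Measure (E × E)) [SFinite Q]
    {W : E × E → ℝ≥0∞} (hW : Measurable W) :
    ∫⁻ p, ∫⁻ q in tube π τ r p ×ˢ tube π τ r p, W q ∂Q ∂lineMeasure m R ≤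
      ENNReal.ofReal ((2 * r) ^ m) ^ 2 * (ENNReal.ofReal ((4 * D * (R + 1)) ^ m) *
        ∫⁻ q, W q * edist q.1 q.2 ^ (-(m : ℝ)) ∂Q) := by
  have hS := (isClosed_tubePairs (π := π) (τ := τ) r).measurableSet
  have hv : ∀ q : E × E, lineMeasure m R {p | (p, q) ∈ tubePairs π τ r} ≤
      ENNReal.ofReal ((2 * r) ^ m) ^ 2 * (ENNReal.ofReal ((4 * D * (R + 1)) ^ m) *
        edist q.1 q.2 ^ (-(m : ℝ))) := fun q => by
    have hq : MeasurableSet {p | (p, q) ∈ tubePairs π τ r} := hS.preimage measurable_prodMk_right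
    have hB : MeasurableSet {θ : Fin m → ℝ | ‖shear π τ θ (q.1 - q.2)‖ ≤ 2 * r} :=
      IsClosed.measurableSet (isClosed_le (by unfold shear; fun_prop) continuous_const)
    rw [lineMeasure, Measure.prod_apply_symm hq]
    calc ∫⁻ θ in closedBall 0 R, volume ((fun z => (z, θ)) ⁻¹' {p | (p, q) ∈ tubePairs π τ r})
        ≤ ∫⁻ θ in closedBall 0 R, {θ : Fin m → ℝ | ‖shear π τ θ (q.1 - q.2)‖ ≤ 2 * r}.indicator
            (fun _ => ENNReal.ofReal ((2 * r) ^ m)) θ := by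
          refine lintegral_mono fun θ => ?_
          by_cases hθ : ‖shear π τ θ (q.1 - q.2)‖ ≤ 2 * r
          · rw [indicator_of_mem (by exact hθ)]
            refine (measure_mono (t := closedBall (shear π τ θ q.1) r) ?_).trans (le_of_eq ?_)
            · rintro z ⟨h1, -⟩
              rw [mem_closedBall, dist_eq_norm, norm_sub_rev]
              exact h1
            · rw [Real.volume_pi_closedBall _ hr.le, Fintype.card_fin]
          · refine le_of_eq_of_le ?_ zero_le
            refine measure_mono_null (t := ∅) ?_ measure_empty
            rintro z ⟨h1, h2⟩
            refine hθ ?_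
            rw [shear_sub, ← sub_sub_sub_cancel_right _ _ z]
            refine (norm_sub_le _ _).trans ?_
            have h1' : ‖shear π τ θ q.1 - z‖ ≤ r := h1
            have h2' : ‖shear π τ θ q.2 - z‖ ≤ r := h2
            linarith
      _ = ENNReal.ofReal ((2 * r) ^ m) *
            volume {θ ∈ closedBall (0 : Fin m → ℝ) R | ‖shear π τ θ (q.1 - q.2)‖ ≤ 2 * r} := by
          rw [lintegral_indicator hB, lintegral_const, Measure.restrict_restrict hB,
            Measure.restrict_apply_univ, inter_comm]
          rfl
      _ ≤ _ := by
          refine (mul_le_mul_right (volume_norm_shear_le hm hD hR (δ := 2 * r) (by positivity) hπτ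
            (q.1 - q.2)) _).trans (le_of_eq ?_)
          rw [← edist_eq_enorm_sub]
          ring
  simp_rw [setLIntegral_tube_prod_eq]
  rw [lintegral_lintegral_swap (f := fun p q =>
    (tubePairs π τ r).indicator (fun x => W x.2) (p, q))
    (measurable_indicator_tubePairs hW r).aemeasurable]
  calc _ = ∫⁻ q, W q * lineMeasure m R {p | (p, q) ∈ tubePairs π τ r} ∂Q := by
        refine lintegral_congr fun q => ?_
        have hq : MeasurableSet {p | (p, q) ∈ tubePairs π τ r} :=
          hS.preimage measurable_prodMk_right
        rw [← setLIntegral_const, ← lintegral_indicator hq]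
        rfl
    _ ≤ ∫⁻ q, ENNReal.ofReal ((2 * r) ^ m) ^ 2 * (ENNReal.ofReal ((4 * D * (R + 1)) ^ m) *
        (W q * edist q.1 q.2 ^ (-(m : ℝ)))) ∂Q := by
        refine lintegral_mono fun q => (mul_le_mul_right (hv q) _).trans (le_of_eq ?_)
        ring
    _ = _ := by
        rw [lintegral_const_mul, lintegral_const_mul] <;> fun_prop

end Shear

section Density

variable {α : Type*} [MeasurableSpace α] {κ ν : Measure α}

lemma sq_lintegral_mul_le {f g : α → ℝ≥0∞} (hf : Measurable f) (hg : Measurable g) :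
    (∫⁻ a, f a * g a ∂κ) ^ 2 ≤ (∫⁻ a, f a ^ 2 ∂κ) * ∫⁻ a, g a ^ 2 ∂κ := by
  have h := ENNReal.lintegral_mul_le_Lp_mul_Lq κ Real.HolderConjugate.two_two hf.aemeasurable
    hg.aemeasurable
  simp only [ENNReal.rpow_ofNat, Pi.mul_apply] at h
  calc _ ≤ _ := pow_le_pow_left' h 2
    _ = _ := by
      rw [mul_pow, ← ENNReal.rpow_mul_natCast, ← ENNReal.rpow_mul_natCast]
      norm_num

/-- A measure satisfying an `L²` bound has a square integrable density. -/
lemma exists_density_of_sq_lintegral_le [SigmaFinite κ] [IsFiniteMeasure ν] {C : ℝ≥0∞} (hC : C ≠ ∞)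
    (h : ∀ φ : α → ℝ≥0∞, Measurable φ → (∫⁻ a, φ a ∂ν) ^ 2 ≤ C * ∫⁻ a, φ a ^ 2 ∂κ) :
    ∃ d : α → ℝ≥0∞, Measurable d ∧ ν = κ.withDensity d ∧ ∫⁻ a, d a ^ 2 ∂κ < ∞ := by
  have hac : ν ≪ κ := by
    refine Measure.AbsolutelyContinuous.mk fun s hs hs0 => ?_
    have h1 := h (s.indicator 1) (measurable_one.indicator hs)
    have h2 : ∀ a, (s.indicator (1 : α → ℝ≥0∞) a) ^ 2 = s.indicator 1 a := fun a => by
      by_cases ha : a ∈ s <;> simp [ha]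
    simp_rw [h2] at h1
    rw [lintegral_indicator_one hs, lintegral_indicator_one hs, hs0, mul_zero] at h1
    simpa using h1
  have hd := Measure.measurable_rnDeriv ν κ
  have heq := Measure.withDensity_rnDeriv_eq ν κ hac
  set d := ν.rnDeriv κ
  refine ⟨d, hd, heq.symm, lt_of_le_of_lt ?_ hC.lt_top⟩
  have hmin : ∀ N : ℕ, Measurable fun a => min (d a) N := fun N => hd.min measurable_const
  have hN : ∀ N : ℕ, ∫⁻ a, (min (d a) N) ^ 2 ∂κ ≤ C := fun N => by
    have h1 := h _ (hmin N)
    rw [← heq, lintegral_withDensity_eq_lintegral_mul _ hd (hmin N)] at h1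
    simp only [Pi.mul_apply] at h1
    have h2 : ∫⁻ a, (min (d a) N) ^ 2 ∂κ ≤ ∫⁻ a, d a * min (d a) N ∂κ :=
      lintegral_mono fun a => by
        rw [sq]
        gcongr
        exact min_le_left _ _
    have h3 : ∫⁻ a, (min (d a) N) ^ 2 ∂κ ≠ ∞ := by
      refine (h2.trans_lt ?_).ne
      calc _ ≤ ∫⁻ a, d a * N ∂κ := lintegral_mono fun a => by
            gcongr
            exact min_le_right _ _
        _ = ν univ * N := by
            rw [lintegral_mul_const _ hd, ← heq, withDensity_apply _ MeasurableSet.univ,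
              Measure.restrict_univ]
        _ < ∞ := ENNReal.mul_lt_top (measure_lt_top _ _) (by simp)
    rcases eq_or_ne (∫⁻ a, (min (d a) N) ^ 2 ∂κ) 0 with h0 | h0
    · rw [h0]; exact zero_le
    · have h4 := (pow_le_pow_left' h2 2).trans h1
      rw [sq] at h4
      exact (ENNReal.mul_le_mul_iff_left h0 h3).1 h4
  have hlim : ∀ a, ⨆ N : ℕ, (min (d a) N) ^ 2 = d a ^ 2 := fun a => by
    have h1 : Tendsto (fun N : ℕ => (min (d a) N) ^ 2) atTop (𝓝 ((min (d a) ∞) ^ 2)) :=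
      (ENNReal.continuous_pow 2).tendsto _ |>.comp
        (tendsto_const_nhds.min ENNReal.tendsto_nat_nhds_top)
    rw [min_top_right] at h1
    refine iSup_eq_of_tendsto (fun M N hMN => ?_) h1
    gcongr
  simp_rw [← hlim]
  rw [lintegral_iSup (fun N => (hmin N).pow_const 2) (fun M N hMN a => by dsimp only; gcongr)]
  exact iSup_le hN

lemma le_measure_limsup [IsFiniteMeasure κ] {s : ℕ → Set α} (hs : ∀ k, MeasurableSet (s k))
    {c : ℝ≥0∞} (hc : ∀ᶠ k in atTop, c ≤ κ (s k)) : c ≤ κ (⋂ N, ⋃ k ≥ N, s k) := by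
  have hm : ∀ N, MeasurableSet (⋃ k ≥ N, s k) := fun N =>
    MeasurableSet.iUnion fun k => MeasurableSet.iUnion fun _ => hs k
  refine ge_of_tendsto (tendsto_measure_iInter_atTop (fun N => (hm N).nullMeasurableSet)
    (fun M N hMN => biUnion_subset_biUnion_left fun k hk => hMN.trans hk)
    ⟨0, measure_ne_top _ _⟩) ?_
  filter_upwards [hc] with N hN
  exact hN.trans (measure_mono fun a ha => mem_biUnion (mem_Ici.2 le_rfl) ha)

/-- If `f k` is bounded in `L²`, `g k` is bounded in `L¹` and the integrals of `f k` against a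
measure with `L²` density stay away from zero, then on a set of positive measure, `f k` is bounded
below and `g k` is bounded above for infinitely many `k`. -/
lemma exists_measure_limsup_pos {d : α → ℝ≥0∞} (hd : Measurable d) (hd1 : ∫⁻ a, d a ∂κ ≠ ∞)
    (hd2 : ∫⁻ a, d a ^ 2 ∂κ ≠ ∞) {f g : ℕ → α → ℝ≥0∞} (hf : ∀ k, Measurable (f k))
    (hg : ∀ k, Measurable (g k)) {C ε : ℝ≥0∞} (hC : C ≠ ∞) (hC0 : C ≠ 0) (hε : ε ≠ 0) (hε' : ε ≠ ∞)
    (hfC : ∀ k, ∫⁻ a, f k a ^ 2 ∂κ ≤ C) (hgC : ∀ k, ∫⁻ a, g k a ∂κ ≤ C)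
    (hfd : ∀ᶠ k in atTop, 3 * ε ≤ ∫⁻ a, f k a * d a ∂κ) :
    ∃ M : ℕ, κ.withDensity d (⋂ N, ⋃ k ≥ N, {a | (M : ℝ≥0∞)⁻¹ ≤ f k a ∧ g k a ≤ M}) ≠ 0 := by
  obtain ⟨δ, hδ, hδd⟩ := exists_pos_setLIntegral_lt_of_measure_lt hd2
    (ε := ε ^ 2 / C) (ENNReal.div_pos (pow_ne_zero 2 hε) hC).ne'
  obtain ⟨M₁, hM₁⟩ := ENNReal.exists_nat_gt (ENNReal.div_ne_top hd1 hε)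
  obtain ⟨M₂, hM₂⟩ := ENNReal.exists_nat_gt (ENNReal.div_ne_top hC hδ.ne')
  set M := max M₁ M₂
  have hM1 : (∫⁻ a, d a ∂κ) / ε < M := hM₁.trans_le (by exact_mod_cast le_max_left _ _)
  have hM2 : C / δ < M := hM₂.trans_le (by exact_mod_cast le_max_right _ _)
  have hM0 : (M : ℝ≥0∞) ≠ 0 := (zero_le.trans_lt hM1).ne'
  have hMt : (M : ℝ≥0∞) ≠ ∞ := by simp
  refine ⟨M, ?_⟩
  set s : ℕ → Set α := fun k => {a | (M : ℝ≥0∞)⁻¹ ≤ f k a ∧ g k a ≤ M}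
  have hs : ∀ k, MeasurableSet (s k) := fun k =>
    (measurableSet_le measurable_const (hf k)).inter (measurableSet_le (hg k) measurable_const)
  have hfin : IsFiniteMeasure (κ.withDensity fun a => d a ^ 2) := isFiniteMeasure_withDensity hd2
  have key : ∀ᶠ k in atTop, ε ^ 2 / C ≤ (κ.withDensity fun a => d a ^ 2) (s k) := by
    filter_upwards [hfd] with k hk
    have hu : MeasurableSet {a | f k a < (M : ℝ≥0∞)⁻¹} := measurableSet_lt (hf k) measurable_const
    have hv : MeasurableSet {a | M < g k a} := measurableSet_lt measurable_const (hg k)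
    have h1 : ∫⁻ a in {a | f k a < (M : ℝ≥0∞)⁻¹}, f k a * d a ∂κ ≤ ε := by
      calc _ ≤ ∫⁻ a in {a | f k a < (M : ℝ≥0∞)⁻¹}, (M : ℝ≥0∞)⁻¹ * d a ∂κ :=
            setLIntegral_mono (hd.const_mul _) fun a ha => by
              gcongr
              exact le_of_lt ha
        _ ≤ ∫⁻ a, (M : ℝ≥0∞)⁻¹ * d a ∂κ := setLIntegral_le_lintegral _ _
        _ = (∫⁻ a, d a ∂κ) / M := by
            rw [lintegral_const_mul _ hd, mul_comm, ENNReal.div_eq_inv_mul, mul_comm]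
        _ ≤ ε := by
            rw [ENNReal.div_le_iff hM0 hMt]
            rw [ENNReal.div_lt_iff (Or.inl hε) (Or.inl hε')] at hM1
            rw [mul_comm]
            exact hM1.le
    have hset : ∀ t, MeasurableSet t → (∫⁻ a in t, f k a * d a ∂κ) ^ 2 ≤
        C * ∫⁻ a in t, d a ^ 2 ∂κ := fun t _ =>
      (sq_lintegral_mul_le (hf k) hd).trans (by
        gcongr
        exact (setLIntegral_le_lintegral _ _).trans (hfC k))
    have h2 : ∫⁻ a in {a | M < g k a}, f k a * d a ∂κ ≤ ε := by
      refine (ENNReal.pow_le_pow_left_iff two_ne_zero).1 ((hset _ hv).trans ?_)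
      have h3 : κ {a | M < g k a} < δ := by
        have h4 := (mul_meas_ge_le_lintegral (μ := κ) (hg k) M).trans (hgC k)
        refine lt_of_le_of_lt
          (measure_mono (t := {a | (M : ℝ≥0∞) ≤ g k a}) fun a (ha : M < g k a) =>
          mem_ofPred.2 ha.le) ?_
        by_contra! h5
        have h6 : (M : ℝ≥0∞) * δ ≤ C := (mul_le_mul_right h5 _).trans h4
        rw [ENNReal.div_lt_iff (Or.inl hδ.ne') (Or.inr hC)] at hM2
        exact absurd h6 (not_le.2 hM2)
      have h7 := (hδd _ h3).le
      rwa [ENNReal.le_div_iff_mul_le (Or.inl hC0) (Or.inl hC), mul_comm] at h7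
    have hcov : (univ : Set α) ⊆ ({a | f k a < (M : ℝ≥0∞)⁻¹} ∪ {a | M < g k a}) ∪ s k := by
      intro a _
      by_cases h3 : f k a < (M : ℝ≥0∞)⁻¹
      · exact Or.inl (Or.inl h3)
      by_cases h4 : M < g k a
      · exact Or.inl (Or.inr h4)
      exact Or.inr ⟨not_lt.1 h3, not_lt.1 h4⟩
    have h8 : ε ≤ ∫⁻ a in s k, f k a * d a ∂κ := by
      by_contra! h9
      have h10 : 3 * ε ≤ ε + ε + ∫⁻ a in s k, f k a * d a ∂κ :=
        calc 3 * ε ≤ ∫⁻ a, f k a * d a ∂κ := hk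
          _ = ∫⁻ a in univ, f k a * d a ∂κ := by rw [Measure.restrict_univ]
          _ ≤ _ := lintegral_mono_set hcov
          _ ≤ _ := lintegral_union_le _ _ _
          _ ≤ _ := add_le_add_left (lintegral_union_le _ _ _) _
          _ ≤ _ := by gcongr
      have h11 : ε + ε + ∫⁻ a in s k, f k a * d a ∂κ < ε + ε + ε :=
        ENNReal.add_lt_add_left (by simp [hε']) h9
      refine absurd (h10.trans_lt h11) (not_lt.2 (le_of_eq ?_))
      ring
    rw [withDensity_apply _ (hs k), ENNReal.div_le_iff hC0 hC, mul_comm]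
    exact (pow_le_pow_left' h8 2).trans (hset _ (hs k))
  have hpos := le_measure_limsup hs key
  intro h0
  have hS : MeasurableSet (⋂ N, ⋃ k ≥ N, s k) :=
    MeasurableSet.iInter fun N => MeasurableSet.iUnion fun k => MeasurableSet.iUnion fun _ => hs k
  rw [withDensity_apply _ hS, lintegral_eq_zero_iff hd] at h0
  rw [withDensity_apply _ hS, lintegral_congr_ae (g := fun _ => 0)
    (h0.mono fun a ha => by simp [ha])] at hpos
  simp only [lintegral_zero, nonpos_iff_eq_zero] at hpos
  exact (ENNReal.div_pos (pow_ne_zero 2 hε) hC).ne' hpos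

end Density

section PushLines

lemma lintegral_prod_lintegral_eq {m : ℕ} {E : Type*} [MeasurableSpace E] (R : ℝ)
    (ν : Measure E) [SFinite ν] {F : ((Fin m → ℝ) × (Fin m → ℝ)) × E → ℝ≥0∞} (hF : Measurable F) :
    ∫⁻ q, ∫⁻ z, F ((z, q.2), q.1) ∂volume ∂(ν.prod (volume.restrict (closedBall 0 R))) =
      ∫⁻ p, ∫⁻ x, F (p, x) ∂ν ∂lineMeasure m R := by
  have h1 : Measurable fun x : (E × (Fin m → ℝ)) × (Fin m → ℝ) => F ((x.2, x.1.2), x.1.1) :=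
    hF.comp (by fun_prop)
  have h2 : Measurable fun q : E × (Fin m → ℝ) => ∫⁻ z, F ((z, q.2), q.1) :=
    h1.lintegral_prod_right'
  rw [lintegral_prod _ h2.aemeasurable,
    lintegral_lintegral_swap (f := fun p x => F (p, x)) hF.aemeasurable]
  refine lintegral_congr fun x => ?_
  have hFx : Measurable fun p => F (p, x) := hF.comp measurable_prodMk_right
  rw [lineMeasure, lintegral_prod_symm' _ hFx]

variable {m : ℕ} {E : Type*} [NormedAddCommGroup E] [NormedSpace ℝ E]
  {π : E →L[ℝ] (Fin m → ℝ)} {τ : E →L[ℝ] ℝ}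

variable (π τ) in
/-- The line through `x` with slope `θ`, as a pair `(z, θ)`. -/
def lineThrough (q : E × (Fin m → ℝ)) : (Fin m → ℝ) × (Fin m → ℝ) := (shear π τ q.2 q.1, q.2)

lemma continuous_lineThrough : Continuous (lineThrough π τ) :=
  ((continuous_shear π τ).comp continuous_swap).prodMk continuous_snd

lemma mem_tube_lineThrough {r : ℝ} {x u : E} {θ : Fin m → ℝ} :
    u ∈ tube π τ r (lineThrough π τ (x, θ)) ↔ ‖shear π τ θ (u - x)‖ ≤ r := by
  rw [shear_sub]; rfl

lemma mul_le_volume_norm_shear_le {R r : ℝ} (hR : 0 < R) (hr : 0 < r) (hrR : r * R ≤ 1) {w : E}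
    (h1 : 1 ≤ R * |τ w|) (h2 : |τ w| ≤ R) (h3 : ‖π w‖ ≤ (R - 1) * |τ w|) :
    ENNReal.ofReal ((2 * r) ^ m) * ENNReal.ofReal (R⁻¹ ^ m) ≤
      volume {θ ∈ closedBall (0 : Fin m → ℝ) R | ‖shear π τ θ w‖ ≤ r} := by
  have hτ : 0 < |τ w| := by
    by_contra! h
    nlinarith
  have hsub : closedBall ((τ w)⁻¹ • π w) (r / |τ w|) ⊆
      {θ ∈ closedBall (0 : Fin m → ℝ) R | ‖shear π τ θ w‖ ≤ r} := by
    intro θ hθ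
    rw [mem_closedBall, dist_eq_norm] at hθ
    refine ⟨?_, ?_⟩
    · rw [mem_closedBall_zero_iff]
      have h4 : ‖(τ w)⁻¹ • π w‖ ≤ R - 1 := by
        rw [norm_smul, norm_inv, Real.norm_eq_abs, inv_mul_le_iff₀ hτ, mul_comm]
        exact h3
      have h5 : r / |τ w| ≤ 1 := by
        rw [div_le_one hτ]
        by_contra! h
        nlinarith
      have h6 := norm_add_le (θ - (τ w)⁻¹ • π w) ((τ w)⁻¹ • π w)
      rw [sub_add_cancel] at h6
      linarith
    · rw [le_div_iff₀ hτ, ← Real.norm_eq_abs, mul_comm, ← norm_smul,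
        smul_sub, smul_inv_smul₀ (abs_pos.1 hτ), norm_sub_rev] at hθ
      exact hθ
  refine le_trans ?_ (measure_mono hsub)
  rw [Real.volume_pi_closedBall _ (by positivity), Fintype.card_fin,
    ← ENNReal.ofReal_mul (by positivity), ← mul_pow]
  refine ENNReal.ofReal_le_ofReal (pow_le_pow_left₀ (by positivity) ?_ m)
  rw [mul_assoc, div_eq_mul_inv]
  gcongr

variable [MeasurableSpace E] [BorelSpace E]

variable (π τ) in
/-- The image of `ν × vol` under `(x, θ) ↦ (shear θ x, θ)`, for `θ` in a ball. -/
noncomputable def pushLines (R : ℝ) (ν : Measure E) : Measure ((Fin m → ℝ) × (Fin m → ℝ)) :=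
  (ν.prod (volume.restrict (closedBall 0 R))).map (lineThrough π τ)

instance (R : ℝ) (ν : Measure E) [IsFiniteMeasure ν] : IsFiniteMeasure (pushLines π τ R ν) := by
  have : IsFiniteMeasure (volume.restrict (closedBall (0 : Fin m → ℝ) R)) :=
    isFiniteMeasure_restrict.2 measure_closedBall_lt_top.ne
  unfold pushLines; infer_instance

lemma lintegral_pushLines (R : ℝ) (ν : Measure E) {φ : (Fin m → ℝ) × (Fin m → ℝ) → ℝ≥0∞}
    (hφ : Measurable φ) : ∫⁻ p, φ p ∂pushLines π τ R ν =
      ∫⁻ q, φ (lineThrough π τ q) ∂(ν.prod (volume.restrict (closedBall 0 R))) :=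
  lintegral_map hφ continuous_lineThrough.measurable

variable [SecondCountableTopology E]

lemma lintegral_measure_tube_lineThrough (r : ℝ) (μ ν : Measure E) [SFinite μ] [SFinite ν]
    (κ : Measure (Fin m → ℝ)) [SFinite κ] :
    ∫⁻ q, μ (tube π τ r (lineThrough π τ q)) ∂(ν.prod κ) =
      ∫⁻ q, κ {θ | ‖shear π τ θ (q.2 - q.1)‖ ≤ r} ∂(ν.prod μ) := by
  have hm : Measurable fun q => μ (tube π τ r (lineThrough π τ q)) :=
    (measurable_measure_tube μ r).comp continuous_lineThrough.measurable
  have hT : MeasurableSet {x : (Fin m → ℝ) × (E × E) | ‖shear π τ x.1 (x.2.2 - x.2.1)‖ ≤ r} :=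
    IsClosed.measurableSet (isClosed_le (by unfold shear; fun_prop) continuous_const)
  obtain ⟨T, hTeq⟩ : ∃ T, T = {x : (Fin m → ℝ) × (E × E) | ‖shear π τ x.1 (x.2.2 - x.2.1)‖ ≤ r} :=
    ⟨_, rfl⟩
  rw [← hTeq] at hT
  have h1 : ∀ θ x, tube π τ r (lineThrough π τ (x, θ)) = Prod.mk x ⁻¹' (Prod.mk θ ⁻¹' T) := by
    intro θ x
    ext u
    rw [mem_tube_lineThrough, hTeq]
    rfl
  have h2 : ∀ q : E × E, {θ | ‖shear π τ θ (q.2 - q.1)‖ ≤ r} = (fun θ => (θ, q)) ⁻¹' T := by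
    intro q
    rw [hTeq]
    rfl
  simp_rw [h2]
  rw [lintegral_prod_symm' _ hm, ← Measure.prod_apply_symm hT, Measure.prod_apply hT]
  refine lintegral_congr fun θ => ?_
  rw [Measure.prod_apply (hT.preimage measurable_prodMk_left)]
  simp_rw [h1]

lemma le_lintegral_pushLines {R r : ℝ} (hR : 0 < R) (hr : 0 < r) (hrR : r * R ≤ 1)
    (μ ν : Measure E) [SFinite μ] [SFinite ν] :
    ENNReal.ofReal (R⁻¹ ^ m) * (ν.prod μ) {q | 1 ≤ R * |τ (q.2 - q.1)| ∧ |τ (q.2 - q.1)| ≤ R ∧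
      ‖π (q.2 - q.1)‖ ≤ (R - 1) * |τ (q.2 - q.1)|} ≤
      ∫⁻ p, (ENNReal.ofReal ((2 * r) ^ m))⁻¹ * μ (tube π τ r p) ∂pushLines π τ R ν := by
  set S := {q : E × E | 1 ≤ R * |τ (q.2 - q.1)| ∧ |τ (q.2 - q.1)| ≤ R ∧
      ‖π (q.2 - q.1)‖ ≤ (R - 1) * |τ (q.2 - q.1)|}
  have hS : MeasurableSet S := by
    simp only [S, ofPred_and]
    exact ((isClosed_le (by fun_prop) (by fun_prop)).inter ((isClosed_le (by fun_prop)
      (by fun_prop)).inter (isClosed_le (by fun_prop) (by fun_prop)))).measurableSet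
  set v := ENNReal.ofReal ((2 * r) ^ m)
  have hv0 : v ≠ 0 := by
    simp only [v, ne_eq, ENNReal.ofReal_eq_zero, not_le]
    positivity
  have hvt : v ≠ ∞ := ENNReal.ofReal_ne_top
  have hm := measurable_measure_tube (π := π) (τ := τ) μ r
  rw [lintegral_const_mul _ hm, lintegral_pushLines R ν hm]
  have hB : ∀ w : E, {θ ∈ closedBall (0 : Fin m → ℝ) R | ‖shear π τ θ w‖ ≤ r} =
      {θ : Fin m → ℝ | ‖shear π τ θ w‖ ≤ r} ∩ closedBall 0 R := fun w => inter_comm _ _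
  have hBm : ∀ w : E, MeasurableSet {θ : Fin m → ℝ | ‖shear π τ θ w‖ ≤ r} := fun w =>
    IsClosed.measurableSet (isClosed_le (by unfold shear; fun_prop) continuous_const)
  rw [lintegral_measure_tube_lineThrough]
  simp_rw [Measure.restrict_apply (hBm _), ← hB]
  calc _ = v⁻¹ * ∫⁻ q in S, v * ENNReal.ofReal (R⁻¹ ^ m) ∂(ν.prod μ) := by
        rw [setLIntegral_const, mul_assoc, ← mul_assoc v⁻¹, ENNReal.inv_mul_cancel hv0 hvt, one_mul]
    _ ≤ v⁻¹ * ∫⁻ q in S, volume {θ ∈ closedBall (0 : Fin m → ℝ) R |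
          ‖shear π τ θ (q.2 - q.1)‖ ≤ r} ∂(ν.prod μ) := by
        refine mul_le_mul_right (setLIntegral_mono' hS fun q hq => ?_) _
        exact mul_le_volume_norm_shear_le hR hr hrR hq.1 hq.2.1 hq.2.2
    _ ≤ _ := mul_le_mul_right (setLIntegral_le_lintegral _ _) _

lemma lintegral_sq_measure_tube_le {D R r : ℝ} (hm : 0 < m) (hD : 0 < D) (hR : 0 < R)
    (hr : 0 < r) (hπτ : ∀ w, ‖w‖ ≤ D * max ‖π w‖ |τ w|) (ν : Measure E) [SFinite ν] :
    ∫⁻ p, ((ENNReal.ofReal ((2 * r) ^ m))⁻¹ * ν (tube π τ r p)) ^ 2 ∂lineMeasure m R ≤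
      ENNReal.ofReal ((4 * D * (R + 1)) ^ m) *
        ∫⁻ q, edist q.1 q.2 ^ (-(m : ℝ)) ∂(ν.prod ν) := by
  set v := ENNReal.ofReal ((2 * r) ^ m)
  have hv0 : v ≠ 0 := by
    simp only [v, ne_eq, ENNReal.ofReal_eq_zero, not_le]
    positivity
  have hvt : v ≠ ∞ := ENNReal.ofReal_ne_top
  have h := lintegral_setLIntegral_tube_le hm hD hR hr hπτ (ν.prod ν) (W := fun _ => 1)
    measurable_const
  simp only [lintegral_const, one_mul, Measure.restrict_apply_univ, Measure.prod_prod] at h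
  have hmeas : Measurable fun p => ν (tube π τ r p) * ν (tube π τ r p) :=
    (measurable_measure_tube ν r).mul (measurable_measure_tube ν r)
  calc _ = v⁻¹ ^ 2 * ∫⁻ p, ν (tube π τ r p) * ν (tube π τ r p) ∂lineMeasure m R := by
        rw [← lintegral_const_mul _ hmeas]
        simp only [mul_pow, sq (ν _)]
    _ ≤ _ := ?_
  refine (mul_le_mul_right h _).trans (le_of_eq ?_)
  rw [← mul_assoc, ← mul_pow, ENNReal.inv_mul_cancel hv0 hvt, one_pow, one_mul]

lemma sq_lintegral_pushLines_le_of_lowerSemicontinuous {D R : ℝ} (hm : 0 < m) (hD : 0 < D)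
    (hR : 0 < R) (hπτ : ∀ w, ‖w‖ ≤ D * max ‖π w‖ |τ w|) (ν : Measure E) [SFinite ν]
    {ψ : (Fin m → ℝ) × (Fin m → ℝ) → ℝ≥0∞} (hψ : LowerSemicontinuous ψ) :
    (∫⁻ p, ψ p ∂pushLines π τ R ν) ^ 2 ≤ ENNReal.ofReal ((4 * D * (R + 1)) ^ m) *
      (∫⁻ q, edist q.1 q.2 ^ (-(m : ℝ)) ∂(ν.prod ν)) * ∫⁻ p, ψ p ^ 2 ∂lineMeasure m R := by
  set C := ENNReal.ofReal ((4 * D * (R + 1)) ^ m) * ∫⁻ q, edist q.1 q.2 ^ (-(m : ℝ)) ∂(ν.prod ν)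
  let r : ℕ → ℝ := fun k => 1 / ((k : ℝ) + 1)
  have hr : ∀ k, 0 < r k := fun k => Nat.one_div_pos_of_nat
  have hr0 : Tendsto r atTop (𝓝 0) := tendsto_one_div_add_atTop_nhds_zero_nat
  let v : ℕ → ℝ≥0∞ := fun k => ENNReal.ofReal ((2 * r k) ^ m)
  have hv0 : ∀ k, v k ≠ 0 := fun k => by
    have := hr k
    simp only [v, ne_eq, ENNReal.ofReal_eq_zero, not_le]
    positivity
  have hvt : ∀ k, v k ≠ ∞ := fun k => ENNReal.ofReal_ne_top
  let F : ℕ → ((Fin m → ℝ) × (Fin m → ℝ)) × E → ℝ≥0∞ := fun k =>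
    {x | x.2 ∈ tube π τ (r k) x.1}.indicator fun x => ψ x.1
  have hF : ∀ k, Measurable (F k) := fun k => (hψ.measurable.comp measurable_fst).indicator
    (isClosed_setOf_mem_tube (r k)).measurableSet
  have hFm : ∀ k, Measurable fun q : E × (Fin m → ℝ) => ∫⁻ z, F k ((z, q.2), q.1) := fun k => by
    have h1 : Measurable fun x : (E × (Fin m → ℝ)) × (Fin m → ℝ) => F k ((x.2, x.1.2), x.1.1) :=
      (hF k).comp (by fun_prop)
    exact h1.lintegral_prod_right'
  have hlim : ∀ q : E × (Fin m → ℝ), ψ (lineThrough π τ q) ≤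
      liminf (fun k => (v k)⁻¹ * ∫⁻ z, F k ((z, q.2), q.1)) atTop := fun q => by
    refine le_of_forall_lt_imp_le_of_dense fun y hy => ?_
    obtain ⟨ε, hε, hball⟩ := Metric.eventually_nhds_iff.1 (hψ _ y hy)
    refine le_liminf_of_le (by isBoundedDefault) ?_
    filter_upwards [hr0.eventually (gt_mem_nhds hε)] with k hk
    calc y = (v k)⁻¹ * ∫⁻ z in closedBall (shear π τ q.2 q.1) (r k), y := by
          rw [setLIntegral_const, Real.volume_pi_closedBall _ (hr k).le, Fintype.card_fin,
            mul_comm y, ← mul_assoc, ENNReal.inv_mul_cancel (hv0 k) (hvt k), one_mul]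
      _ ≤ (v k)⁻¹ * ∫⁻ z, F k ((z, q.2), q.1) := by
          rw [← lintegral_indicator isClosed_closedBall.measurableSet]
          refine mul_le_mul_right (lintegral_mono fun z => ?_) _
          by_cases hz : z ∈ closedBall (shear π τ q.2 q.1) (r k)
          swap
          · rw [indicator_of_notMem hz]
            exact zero_le
          rw [indicator_of_mem hz]
          have hz' : ‖shear π τ q.2 q.1 - z‖ ≤ r k := by
            rwa [mem_closedBall', dist_eq_norm] at hz
          have hmem : ((z, q.2), q.1) ∈ {x : ((Fin m → ℝ) × (Fin m → ℝ)) × E |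
            x.2 ∈ tube π τ (r k) x.1} := hz'
          simp only [F]
          rw [indicator_of_mem hmem]
          refine (hball ?_).le
          rw [lineThrough, Prod.dist_eq]
          simpa [hε] using (mem_closedBall.1 hz).trans_lt hk
  have hk : ∀ k, ∫⁻ q, (v k)⁻¹ * ∫⁻ z, F k ((z, q.2), q.1) ∂volume
      ∂(ν.prod (volume.restrict (closedBall 0 R))) ≤
        (C * ∫⁻ p, ψ p ^ 2 ∂lineMeasure m R) ^ (2 : ℝ)⁻¹ := fun k => by
    rw [ENNReal.le_rpow_inv_iff two_pos, ENNReal.rpow_two, lintegral_const_mul _ (hFm k),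
      lintegral_prod_lintegral_eq R ν (hF k), ← lintegral_const_mul _ (hF k).lintegral_prod_right']
    have h1 : ∀ p, (v k)⁻¹ * ∫⁻ x, F k (p, x) ∂ν = ((v k)⁻¹ * ν (tube π τ (r k) p)) * ψ p :=
      fun p => by
        have : ∫⁻ x, F k (p, x) ∂ν = ∫⁻ x in tube π τ (r k) p, ψ p ∂ν := by
          rw [← lintegral_indicator (isClosed_tube (r k) p).measurableSet]
          rfl
        rw [this, setLIntegral_const]
        ring
    simp_rw [h1]
    refine (sq_lintegral_mul_le ((measurable_measure_tube ν (r k)).const_mul _)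
      hψ.measurable).trans ?_
    gcongr
    exact lintegral_sq_measure_tube_le hm hD hR (hr k) hπτ ν
  rw [← ENNReal.rpow_two, ← ENNReal.le_rpow_inv_iff two_pos, lintegral_pushLines R ν hψ.measurable]
  refine (lintegral_mono hlim).trans ((lintegral_liminf_le fun k => (hFm k).const_mul _).trans ?_)
  exact liminf_le_of_frequently_le' (Frequently.of_forall hk)

/-- The measure `pushLines π τ R ν` has an `L²` density if `ν` has finite `m`-energy. -/
lemma sq_lintegral_pushLines_le {D R : ℝ} (hm : 0 < m) (hD : 0 < D)
    (hR : 0 < R) (hπτ : ∀ w, ‖w‖ ≤ D * max ‖π w‖ |τ w|) (ν : Measure E) [SFinite ν]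
    (hν : ∫⁻ q, edist q.1 q.2 ^ (-(m : ℝ)) ∂(ν.prod ν) ≠ ∞)
    {φ : (Fin m → ℝ) × (Fin m → ℝ) → ℝ≥0∞} (hφ : Measurable φ) :
    (∫⁻ p, φ p ∂pushLines π τ R ν) ^ 2 ≤ ENNReal.ofReal ((4 * D * (R + 1)) ^ m) *
      (∫⁻ q, edist q.1 q.2 ^ (-(m : ℝ)) ∂(ν.prod ν)) * ∫⁻ p, φ p ^ 2 ∂lineMeasure m R := by
  set C := ENNReal.ofReal ((4 * D * (R + 1)) ^ m) * ∫⁻ q, edist q.1 q.2 ^ (-(m : ℝ)) ∂(ν.prod ν)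
  have hC : C ≠ ∞ := ENNReal.mul_ne_top ENNReal.ofReal_ne_top hν
  have key : ∀ k : ℕ, (∫⁻ p, φ p ∂pushLines π τ R ν) ^ 2 ≤
      C * (∫⁻ p, φ p ^ 2 ∂lineMeasure m R + ((k : ℝ≥0∞) + 1)⁻¹) := fun k => by
    obtain ⟨g, hφg, hg, hgi⟩ := exists_le_lowerSemicontinuous_lintegral_ge (lineMeasure m R)
      (fun p => φ p ^ 2) (hφ.pow_const 2) (ε := ((k : ℝ≥0∞) + 1)⁻¹) (by simp)
    have hψ : LowerSemicontinuous fun p => g p ^ (2 : ℝ)⁻¹ :=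
      ENNReal.continuous_rpow_const.comp_lowerSemicontinuous hg
        (ENNReal.monotone_rpow_of_nonneg (by norm_num))
    have hsq : ∀ p, (g p ^ (2 : ℝ)⁻¹) ^ 2 = g p := fun p => by
      rw [← ENNReal.rpow_mul_natCast]; norm_num
    have h1 := sq_lintegral_pushLines_le_of_lowerSemicontinuous hm hD hR hπτ ν hψ
    simp_rw [hsq] at h1
    calc _ ≤ (∫⁻ p, g p ^ (2 : ℝ)⁻¹ ∂pushLines π τ R ν) ^ 2 := by
          gcongr with p
          rw [ENNReal.le_rpow_inv_iff two_pos, ENNReal.rpow_two]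
          exact hφg p
      _ ≤ _ := h1
      _ ≤ _ := by gcongr
  have hlim : Tendsto (fun k : ℕ => C * (∫⁻ p, φ p ^ 2 ∂lineMeasure m R + ((k : ℝ≥0∞) + 1)⁻¹))
      atTop (𝓝 (C * (∫⁻ p, φ p ^ 2 ∂lineMeasure m R + 0))) := by
    refine ENNReal.Tendsto.const_mul (tendsto_const_nhds.add ?_) (Or.inr hC)
    have := (tendsto_add_atTop_iff_nat 1).2 ENNReal.tendsto_inv_nat_nhds_zero
    simpa using this
  rw [add_zero] at hlim
  exact ge_of_tendsto' hlim key

end PushLines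

section RichLines

variable {m : ℕ} {E : Type*} [NormedAddCommGroup E] [NormedSpace ℝ E] [MeasurableSpace E]
  (π : E →L[ℝ] (Fin m → ℝ)) (τ : E →L[ℝ] ℝ) (μ : Measure E) (a : ℝ)

/-- The normalized mass of the tube of radius `1 / (k + 1)` around a line. -/
noncomputable def tubeMass (k : ℕ) (p : (Fin m → ℝ) × (Fin m → ℝ)) : ℝ≥0∞ :=
  (ENNReal.ofReal ((2 * (1 / ((k : ℝ) + 1))) ^ m))⁻¹ * μ (tube π τ (1 / ((k : ℝ) + 1)) p)

/-- The normalized `a`-energy of the restriction of `μ` to the tube of radius `1 / (k + 1)` around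
a line. -/
noncomputable def tubeEnergy (k : ℕ) (p : (Fin m → ℝ) × (Fin m → ℝ)) : ℝ≥0∞ :=
  (ENNReal.ofReal ((2 * (1 / ((k : ℝ) + 1))) ^ m))⁻¹ ^ 2 *
    ∫⁻ q in tube π τ (1 / ((k : ℝ) + 1)) p ×ˢ tube π τ (1 / ((k : ℝ) + 1)) p,
      edist q.1 q.2 ^ (-a) ∂(μ.prod μ)

/-- The lines around which infinitely many tubes have large mass and bounded `a`-energy. -/
def richLines : Set ((Fin m → ℝ) × (Fin m → ℝ)) :=
  ⋃ M : ℕ, ⋂ N : ℕ, ⋃ k ≥ N,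
    {p | (M : ℝ≥0∞)⁻¹ ≤ tubeMass π τ μ k p ∧ tubeEnergy π τ μ a k p ≤ M}

variable [BorelSpace E] [SecondCountableTopology E] {π τ μ a}

lemma measurable_tubeMass [SFinite μ] (k : ℕ) : Measurable (tubeMass π τ μ k) :=
  (measurable_measure_tube μ _).const_mul _

lemma measurable_tubeEnergy [SFinite μ] (k : ℕ) : Measurable (tubeEnergy π τ μ a k) :=
  (measurable_setLIntegral_tube (μ.prod μ) (W := fun q => edist q.1 q.2 ^ (-a))
    (by fun_prop) _).const_mul _

lemma measurableSet_richLines [SFinite μ] : MeasurableSet (richLines π τ μ a) :=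
  MeasurableSet.iUnion fun _ => MeasurableSet.iInter fun _ => MeasurableSet.iUnion fun k =>
    MeasurableSet.iUnion fun _ =>
      (measurableSet_le measurable_const (measurable_tubeMass k)).inter
        (measurableSet_le (measurable_tubeEnergy k) measurable_const)

lemma pushLines_richLines_ne_zero {D R : ℝ} (hm : 0 < m) (hD : 0 < D) (hR : 0 < R)
    (hπτ : ∀ w, ‖w‖ ≤ D * max ‖π w‖ |τ w|) {ν : Measure E} [IsFiniteMeasure μ] [IsFiniteMeasure ν]
    (hν : ∫⁻ q, edist q.1 q.2 ^ (-(m : ℝ)) ∂(ν.prod ν) ≠ ∞)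
    (hμ : ∫⁻ q, edist q.1 q.2 ^ (-(m : ℝ)) ∂(μ.prod μ) ≠ ∞)
    (hμa : ∫⁻ q, edist q.1 q.2 ^ (-a) * edist q.1 q.2 ^ (-(m : ℝ)) ∂(μ.prod μ) ≠ ∞)
    (hpos : (ν.prod μ) {q | 1 ≤ R * |τ (q.2 - q.1)| ∧ |τ (q.2 - q.1)| ≤ R ∧
      ‖π (q.2 - q.1)‖ ≤ (R - 1) * |τ (q.2 - q.1)|} ≠ 0) :
    pushLines π τ R ν (richLines π τ μ a) ≠ 0 := by
  obtain ⟨d, hd, hνd, hd2⟩ := exists_density_of_sq_lintegral_le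
    (ENNReal.mul_ne_top ENNReal.ofReal_ne_top hν)
    fun φ hφ => sq_lintegral_pushLines_le hm hD hR hπτ ν hν hφ
  set c := ENNReal.ofReal (R⁻¹ ^ m) * (ν.prod μ) {q | 1 ≤ R * |τ (q.2 - q.1)| ∧
    |τ (q.2 - q.1)| ≤ R ∧ ‖π (q.2 - q.1)‖ ≤ (R - 1) * |τ (q.2 - q.1)|}
  have hc0 : c ≠ 0 := by
    refine mul_ne_zero ?_ hpos
    simp only [ne_eq, ENNReal.ofReal_eq_zero, not_le]
    positivity
  have hct : c ≠ ∞ := ENNReal.mul_ne_top ENNReal.ofReal_ne_top (measure_ne_top _ _)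
  have hd1 : ∫⁻ p, d p ∂lineMeasure m R ≠ ∞ := by
    rw [← setLIntegral_univ, ← withDensity_apply _ MeasurableSet.univ, ← hνd]
    exact measure_ne_top _ _
  set C₀ := ENNReal.ofReal ((4 * D * (R + 1)) ^ m)
  set C := C₀ * ∫⁻ q, edist q.1 q.2 ^ (-(m : ℝ)) ∂(μ.prod μ) +
    C₀ * ∫⁻ q, edist q.1 q.2 ^ (-a) * edist q.1 q.2 ^ (-(m : ℝ)) ∂(μ.prod μ) + 1
  have hr : ∀ k : ℕ, (0 : ℝ) < 1 / ((k : ℝ) + 1) := fun k => Nat.one_div_pos_of_nat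
  obtain ⟨M, hM⟩ := exists_measure_limsup_pos (κ := lineMeasure m R) hd hd1 hd2.ne
    (f := tubeMass π τ μ) (g := tubeEnergy π τ μ a) measurable_tubeMass measurable_tubeEnergy
    (C := C) (ε := c / 3) (by finiteness) (by simp [C])
    (ENNReal.div_pos hc0 (by simp)).ne' (ENNReal.div_ne_top hct (by simp))
    (fun k => (lintegral_sq_measure_tube_le hm hD hR (hr k) hπτ μ).trans
      (le_self_add.trans le_self_add))
    (fun k => by
      refine le_trans ?_ (le_add_self.trans le_self_add)
      have hW : Measurable fun q : E × E => edist q.1 q.2 ^ (-a) := by fun_prop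
      have h := lintegral_setLIntegral_tube_le hm hD hR (hr k) hπτ (μ.prod μ) hW
      unfold tubeEnergy
      rw [lintegral_const_mul _ (measurable_setLIntegral_tube _ hW _)]
      refine (mul_le_mul_right h _).trans (le_of_eq ?_)
      rw [← mul_assoc, ← mul_pow, ENNReal.inv_mul_cancel, one_pow, one_mul]
      · have := hr k
        simp only [ne_eq, ENNReal.ofReal_eq_zero, not_le]
        positivity
      · exact ENNReal.ofReal_ne_top)
    (by
      have h1 : ∀ᶠ k : ℕ in atTop, 1 / ((k : ℝ) + 1) * R ≤ 1 := by
        have := (tendsto_one_div_add_atTop_nhds_zero_nat (𝕜 := ℝ)).mul_const R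
        rw [zero_mul] at this
        exact this.eventually (Iic_mem_nhds one_pos)
      filter_upwards [h1] with k hk
      rw [ENNReal.mul_div_cancel (by simp) (by simp)]
      refine (le_lintegral_pushLines hR (hr k) hk μ ν).trans (le_of_eq ?_)
      change ∫⁻ p, tubeMass π τ μ k p ∂pushLines π τ (R : ℝ) ν = _
      rw [hνd, lintegral_withDensity_eq_lintegral_mul _ hd (measurable_tubeMass k)]
      simp_rw [Pi.mul_apply, mul_comm (d _)])
  rw [← hνd] at hM
  exact fun h0 => hM (measure_mono_null (subset_iUnion_of_subset M subset_rfl) h0)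

/-- If `μ` has finite `(m + a)`-energy and `ν` has finite `m`-energy then for `ν`-many points `x`,
many lines through `x` are rich. -/
lemma measure_volume_lineThrough_pos {D : ℝ} (hm : 0 < m) (hD : 0 < D)
    (hπτ : ∀ w, ‖w‖ ≤ D * max ‖π w‖ |τ w|) {ν : Measure E} [IsFiniteMeasure μ] [IsFiniteMeasure ν]
    (hν : ∫⁻ q, edist q.1 q.2 ^ (-(m : ℝ)) ∂(ν.prod ν) ≠ ∞)
    (hμ : ∫⁻ q, edist q.1 q.2 ^ (-(m : ℝ)) ∂(μ.prod μ) ≠ ∞)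
    (hμa : ∫⁻ q, edist q.1 q.2 ^ (-a) * edist q.1 q.2 ^ (-(m : ℝ)) ∂(μ.prod μ) ≠ ∞)
    (hpos : (ν.prod μ) {q | τ (q.2 - q.1) ≠ 0} ≠ 0) :
    ν {x | volume {θ | lineThrough π τ (x, θ) ∈ richLines π τ μ a} ≠ 0} ≠ 0 := by
  have hcov : {q : E × E | τ (q.2 - q.1) ≠ 0} ⊆ ⋃ R : ℕ, {q | 1 ≤ ((R : ℝ) + 1) * |τ (q.2 - q.1)| ∧
      |τ (q.2 - q.1)| ≤ (R : ℝ) + 1 ∧ ‖π (q.2 - q.1)‖ ≤ ((R : ℝ) + 1 - 1) * |τ (q.2 - q.1)|} := by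
    intro q hq
    have hτ : 0 < |τ (q.2 - q.1)| := abs_pos.2 hq
    obtain ⟨R, hR⟩ := exists_nat_gt (max (1 / |τ (q.2 - q.1)|)
      (max |τ (q.2 - q.1)| (‖π (q.2 - q.1)‖ / |τ (q.2 - q.1)|)))
    simp only [max_lt_iff, div_lt_iff₀ hτ] at hR
    refine mem_iUnion.2 ⟨R, by nlinarith, by linarith, by linarith⟩
  obtain ⟨R, hR⟩ : ∃ R : ℕ, (ν.prod μ) {q | 1 ≤ ((R : ℝ) + 1) * |τ (q.2 - q.1)| ∧
      |τ (q.2 - q.1)| ≤ (R : ℝ) + 1 ∧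
        ‖π (q.2 - q.1)‖ ≤ ((R : ℝ) + 1 - 1) * |τ (q.2 - q.1)|} ≠ 0 := by
    by_contra! hcon
    exact hpos (measure_mono_null hcov (measure_iUnion_null hcon))
  have h := pushLines_richLines_ne_zero hm hD (by positivity : (0 : ℝ) < R + 1) hπτ hν hμ hμa hR
  have hG := measurableSet_richLines (π := π) (τ := τ) (μ := μ) (a := a)
  rw [pushLines, Measure.map_apply continuous_lineThrough.measurable hG] at h
  refine fun h0 => h
    ((Measure.measure_prod_null (hG.preimage continuous_lineThrough.measurable)).2 ?_)
  filter_upwards [measure_eq_zero_iff_ae_notMem.1 h0] with x hx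
  exact Measure.absolutelyContinuous_of_le Measure.restrict_le_self (not_not.1 hx)

end RichLines

section Slices

lemma exists_isOpen_cover_of_hausdorffMeasure_eq_zero {X : Type*} [EMetricSpace X]
    [MeasurableSpace X] [BorelSpace X] {a : ℝ} (ha : 0 < a) {S : Set X} (hS : μH[a] S = 0)
    {ε : ℝ≥0∞} (hε : ε ≠ 0) :
    ∃ (U : ℕ → Set X) (w : ℕ → ℝ≥0∞), (∀ i, IsOpen (U i)) ∧ S ⊆ ⋃ i, U i ∧
      (∀ i, w i ≠ 0 ∧ w i ≠ ∞ ∧ ediam (U i) ^ a ≤ w i) ∧ ∑' i, w i < ε := by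
  rw [Measure.hausdorffMeasure_apply] at hS
  simp only [ENNReal.iSup_eq_zero] at hS
  have h1 := (hS 1 one_pos).trans_lt (ENNReal.half_pos hε)
  simp only [iInf_lt_iff] at h1
  obtain ⟨t, hSt, ht1, htε⟩ := h1
  have hsum : ∑' i, ediam (t i) ^ a ≤ ∑' i, ⨆ _ : (t i).Nonempty, ediam (t i) ^ a := by
    refine ENNReal.tsum_le_tsum fun i => ?_
    rcases (t i).eq_empty_or_nonempty with h | h
    · simp [h, ENNReal.zero_rpow_of_pos ha]
    · exact le_iSup (fun _ : (t i).Nonempty => ediam (t i) ^ a) h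
  obtain ⟨δ, hδ, hδε⟩ := ENNReal.exists_pos_sum_of_countable (ENNReal.half_pos hε).ne' ℕ
  have hfin : ∀ i, ediam (t i) ^ a ≠ ∞ := fun i =>
    ENNReal.rpow_ne_top_of_nonneg ha.le ((ht1 i).trans_lt ENNReal.one_lt_top).ne
  have hthick : ∀ i, ∃ η : ℝ≥0, 0 < η ∧ (ediam (t i) + 2 * η) ^ a < ediam (t i) ^ a + δ i := by
    intro i
    have hc : Continuous fun η : ℝ≥0 => (ediam (t i) + 2 * η) ^ a :=
      ENNReal.continuous_rpow_const.comp (continuous_const.add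
        ((ENNReal.continuous_const_mul (by simp)).comp ENNReal.continuous_coe))
    have h0 : (ediam (t i) + 2 * (0 : ℝ≥0)) ^ a < ediam (t i) ^ a + δ i := by
      simpa using ENNReal.lt_add_right (hfin i) (ENNReal.coe_ne_zero.2 (hδ i).ne')
    have hev := ((hc.tendsto 0).eventually (gt_mem_nhds h0)).filter_mono
      (nhdsWithin_le_nhds (s := Ioi 0))
    obtain ⟨η, hη, hη0⟩ := (hev.and self_mem_nhdsWithin).exists
    exact ⟨η, hη0, hη⟩
  choose η hη0 hη using hthick
  refine ⟨fun i => thickening (η i) (t i), fun i => ediam (t i) ^ a + δ i,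
    fun i => isOpen_thickening, fun x hx => ?_, fun i => ⟨?_, ?_, ?_⟩, ?_⟩
  · obtain ⟨i, hi⟩ := mem_iUnion.1 (hSt hx)
    exact mem_iUnion.2 ⟨i, self_subset_thickening (NNReal.coe_pos.2 (hη0 i)) _ hi⟩
  · simp [(hδ i).ne']
  · exact ENNReal.add_ne_top.2 ⟨hfin i, ENNReal.coe_ne_top⟩
  · exact (ENNReal.rpow_le_rpow (ediam_thickening_le _) ha.le).trans (hη i).le
  · rw [ENNReal.tsum_add, ← ENNReal.add_halves ε]
    exact ENNReal.add_lt_add (hsum.trans_lt htε) hδε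

lemma sq_measure_le_mul_tsum {X : Type*} [EMetricSpace X] [SecondCountableTopology X]
    [MeasurableSpace X] [BorelSpace X] {a : ℝ} (ha : 0 < a) (μ : Measure X) [SFinite μ]
    {T : Set X} (hT : MeasurableSet T) {U : ℕ → Set X} (hU : ∀ i, MeasurableSet (U i))
    (hTU : μ (T \ ⋃ i, U i) = 0) {w : ℕ → ℝ≥0∞}
    (hw : ∀ i, w i ≠ 0 ∧ w i ≠ ∞ ∧ ediam (U i) ^ a ≤ w i) :
    μ T ^ 2 ≤ (∫⁻ q in T ×ˢ T, edist q.1 q.2 ^ (-a) ∂(μ.prod μ)) * ∑' i, w i := by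
  set V : ℕ → Set X := fun i => T ∩ disjointed U i
  have hV : ∀ i, MeasurableSet (V i) := fun i => hT.inter (MeasurableSet.disjointed hU i)
  have hVd : Pairwise (Function.onFun Disjoint V) := fun i j hij =>
    (disjoint_disjointed U hij).mono inter_subset_right inter_subset_right
  have h1 : μ T ≤ ∑' i, μ (V i) := by
    refine le_trans ?_ (measure_iUnion_le V)
    rw [← inter_iUnion, iUnion_disjointed, ← measure_inter_add_sdiff T (MeasurableSet.iUnion hU),
      hTU, add_zero]
  have hCS := sq_lintegral_mul_le (κ := Measure.count)
    (f := fun i : ℕ => μ (V i) * (w i ^ (2⁻¹ : ℝ))⁻¹) (g := fun i => w i ^ (2⁻¹ : ℝ))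
    (measurable_of_countable _) (measurable_of_countable _)
  simp only [lintegral_count] at hCS
  have hroot : ∀ i, (w i ^ (2⁻¹ : ℝ)) ^ 2 = w i := fun i => by
    rw [← ENNReal.rpow_two, ← ENNReal.rpow_mul]; norm_num
  have hprod : ∀ i, μ (V i) * (w i ^ (2⁻¹ : ℝ))⁻¹ * w i ^ (2⁻¹ : ℝ) = μ (V i) := fun i => by
    rw [mul_assoc, ENNReal.inv_mul_cancel, mul_one]
    · exact (ENNReal.rpow_pos (pos_iff_ne_zero.2 (hw i).1) (hw i).2.1).ne'
    · exact ENNReal.rpow_ne_top_of_nonneg (by norm_num) (hw i).2.1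
  simp only [hprod, mul_pow, ← ENNReal.inv_pow, hroot] at hCS
  refine (pow_le_pow_left' h1 2).trans (hCS.trans (mul_le_mul_left ?_ _))
  calc ∑' i, μ (V i) ^ 2 * (w i)⁻¹
      ≤ ∑' i, ∫⁻ q in V i ×ˢ V i, edist q.1 q.2 ^ (-a) ∂(μ.prod μ) := by
        refine ENNReal.tsum_le_tsum fun i => ?_
        rw [sq, ← Measure.prod_prod, mul_comm, ← setLIntegral_const]
        refine setLIntegral_mono' ((hV i).prod (hV i)) fun q hq => ?_
        rw [ENNReal.rpow_neg, ENNReal.inv_le_inv]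
        exact (ENNReal.rpow_le_rpow (edist_le_ediam_of_mem (disjointed_subset U i hq.1.2)
          (disjointed_subset U i hq.2.2)) ha.le).trans (hw i).2.2
    _ = ∫⁻ q in ⋃ i, V i ×ˢ V i, edist q.1 q.2 ^ (-a) ∂(μ.prod μ) := by
        rw [lintegral_iUnion (fun i => (hV i).prod (hV i))]
        exact fun i j hij => Disjoint.set_prod_left (hVd hij) _ _
    _ ≤ _ := lintegral_mono_set (iUnion_subset fun i =>
        prod_mono inter_subset_left inter_subset_left)

variable {m : ℕ} {E : Type*} [NormedAddCommGroup E] [NormedSpace ℝ E] [MeasurableSpace E]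
  [BorelSpace E] [SecondCountableTopology E]
  {π : E →L[ℝ] (Fin m → ℝ)} {τ : E →L[ℝ] ℝ} {μ : Measure E} {a : ℝ}

/-- A rich line meets any compact carrier of `μ` in a set of positive `a`-dimensional measure. -/
lemma hausdorffMeasure_slice_ne_zero [IsFiniteMeasure μ] (ha : 0 < a) {K : Set E}
    (hK : IsCompact K) (hμK : μ Kᶜ = 0) {p : (Fin m → ℝ) × (Fin m → ℝ)}
    (hp : p ∈ richLines π τ μ a) : μH[a] (K ∩ {u | shear π τ p.2 u = p.1}) ≠ 0 := by
  intro h0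
  obtain ⟨M, hM⟩ := mem_iUnion.1 hp
  rw [mem_iInter] at hM
  have key : ∀ ε : ℝ≥0∞, ε ≠ 0 → (M : ℝ≥0∞)⁻¹ ^ 2 ≤ M * ε := by
    intro ε hε
    obtain ⟨U, w, hU, hSU, hw, hwε⟩ := exists_isOpen_cover_of_hausdorffMeasure_eq_zero ha h0 hε
    have hKU : IsCompact (K \ ⋃ i, U i) := hK.diff (isOpen_iUnion hU)
    have hcont : Continuous fun u => ‖shear π τ p.2 u - p.1‖ :=
      ((((continuous_shear π τ).comp (continuous_const.prodMk continuous_id)).sub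
        continuous_const)).norm
    obtain ⟨δ, hδ, hδK⟩ := hKU.exists_forall_le' (f := fun u => ‖shear π τ p.2 u - p.1‖) (a := 0)
      hcont.continuousOn (fun u hu => by
        rw [norm_pos_iff, sub_ne_zero]
        exact fun h => hu.2 (hSU ⟨hu.1, h⟩))
    obtain ⟨N, hN⟩ := exists_nat_one_div_lt hδ
    obtain ⟨k, hkN, hk1, hk2⟩ : ∃ k ≥ N, (M : ℝ≥0∞)⁻¹ ≤ tubeMass π τ μ k p ∧
        tubeEnergy π τ μ a k p ≤ M := by
      obtain ⟨k, hk⟩ := mem_iUnion.1 (hM N)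
      obtain ⟨hkN, hk⟩ := mem_iUnion.1 hk
      exact ⟨k, hkN, hk⟩
    have hkδ : 1 / ((k : ℝ) + 1) < δ :=
      (Nat.one_div_le_one_div hkN).trans_lt hN
    have hcover : μ (tube π τ (1 / ((k : ℝ) + 1)) p \ ⋃ i, U i) = 0 := by
      refine measure_mono_null (t := Kᶜ) (fun u hu => fun huK => ?_) hμK
      exact absurd ((hδK u ⟨huK, hu.2⟩).trans hu.1) (not_le.2 hkδ)
    have h2 := sq_measure_le_mul_tsum ha μ (isClosed_tube _ p).measurableSet
      (fun i => (hU i).measurableSet) hcover hw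
    calc (M : ℝ≥0∞)⁻¹ ^ 2 ≤ tubeMass π τ μ k p ^ 2 := pow_le_pow_left' hk1 2
      _ ≤ tubeEnergy π τ μ a k p * ∑' i, w i := by
          rw [tubeMass, tubeEnergy, mul_pow, mul_assoc]
          exact mul_le_mul_right h2 _
      _ ≤ M * ε := mul_le_mul' hk2 hwε.le
  have hM0 : (M : ℝ≥0∞)⁻¹ ^ 2 ≠ 0 := by simp
  rcases Nat.eq_zero_or_pos M with rfl | hMpos
  · simpa using key 1 one_ne_zero
  · have hMne : (M : ℝ≥0∞) ≠ 0 := by exact_mod_cast hMpos.ne'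
    have h3 := key ((M : ℝ≥0∞)⁻¹ * ((M : ℝ≥0∞)⁻¹ ^ 2 / 2)) (by
      refine mul_ne_zero (by simp) (ENNReal.half_pos hM0).ne')
    rw [← mul_assoc, ENNReal.mul_inv_cancel hMne (by simp), one_mul] at h3
    exact absurd h3 (not_le.2 (ENNReal.half_lt_self hM0 (by simp [hMne])))

end Slices

section Directions

variable {m : ℕ} {E : Type*} [NormedAddCommGroup E] [NormedSpace ℝ E]
  {π : E →L[ℝ] (Fin m → ℝ)} {τ : E →L[ℝ] ℝ}

lemma lipschitzOnWith_inv_smul {δ : ℝ} (hδ : 0 < δ) :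
    ∃ L, LipschitzOnWith L (fun e => (τ e)⁻¹ • π e) {e | ‖e‖ = 1 ∧ δ ≤ τ e} := by
  refine ⟨(δ⁻¹ * ‖π‖ + δ⁻¹ ^ 2 * ‖τ‖ * ‖π‖).toNNReal, .of_dist_le' fun e he f hf => ?_⟩
  have hτe : 0 < τ e := hδ.trans_le he.2
  have hτf : 0 < τ f := hδ.trans_le hf.2
  have h1 : (τ e)⁻¹ • π e - (τ f)⁻¹ • π f =
      (τ e)⁻¹ • π (e - f) - ((τ e)⁻¹ * (τ f)⁻¹ * τ (e - f)) • π f := by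
    have : (τ e)⁻¹ * (τ f)⁻¹ * τ (e - f) = (τ f)⁻¹ - (τ e)⁻¹ := by
      rw [map_sub]; field_simp
    rw [this, map_sub, smul_sub, sub_smul]
    abel
  have he' : (τ e)⁻¹ ≤ δ⁻¹ := inv_anti₀ hδ he.2
  have hf' : (τ f)⁻¹ ≤ δ⁻¹ := inv_anti₀ hδ hf.2
  have hπf : ‖π f‖ ≤ ‖π‖ := by simpa [hf.1] using π.le_opNorm f
  rw [dist_eq_norm, dist_eq_norm, h1]
  calc _ ≤ ‖(τ e)⁻¹ • π (e - f)‖ + ‖((τ e)⁻¹ * (τ f)⁻¹ * τ (e - f)) • π f‖ := norm_sub_le _ _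
    _ = (τ e)⁻¹ * ‖π (e - f)‖ + (τ e)⁻¹ * (τ f)⁻¹ * ‖τ (e - f)‖ * ‖π f‖ := by
        rw [norm_smul, norm_smul, norm_mul, norm_mul, norm_inv, norm_inv,
          Real.norm_of_nonneg hτe.le, Real.norm_of_nonneg hτf.le]
    _ ≤ δ⁻¹ * (‖π‖ * ‖e - f‖) + δ⁻¹ * δ⁻¹ * (‖τ‖ * ‖e - f‖) * ‖π‖ := by
        gcongr
        · exact π.le_opNorm _
        · exact τ.le_opNorm _
    _ = _ := by ring

lemma hausdorffMeasure_directions_ne_zero [MeasurableSpace E] [BorelSpace E]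
    {Θ : Set (Fin m → ℝ)} (hΘ : volume Θ ≠ 0) {S : Set E} (hS : ∀ e ∈ S, ‖e‖ = 1)
    (hΘS : ∀ θ ∈ Θ, ∃ e ∈ S, 0 < τ e ∧ π e = τ e • θ) : μH[(m : ℝ)] S ≠ 0 := by
  intro h0
  refine hΘ (measure_mono_null (t := ⋃ k : ℕ, (fun e => (τ e)⁻¹ • π e) ''
    (S ∩ {e | 1 / ((k : ℝ) + 1) ≤ τ e})) (fun θ hθ => ?_) (measure_iUnion_null fun k => ?_))
  · obtain ⟨e, he, hτ, hπ⟩ := hΘS θ hθ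
    obtain ⟨k, hk⟩ := exists_nat_one_div_lt hτ
    refine mem_iUnion.2 ⟨k, e, ⟨he, hk.le⟩, ?_⟩
    simp only [hπ, smul_smul, inv_mul_cancel₀ hτ.ne', one_smul]
  · obtain ⟨L, hL⟩ := lipschitzOnWith_inv_smul (π := π) (τ := τ)
      (Nat.one_div_pos_of_nat (α := ℝ) (n := k))
    have hsub : S ∩ {e | 1 / ((k : ℝ) + 1) ≤ τ e} ⊆ {e | ‖e‖ = 1 ∧ 1 / ((k : ℝ) + 1) ≤ τ e} :=
      fun e he => ⟨hS e he.1, he.2⟩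
    have h1 := (hL.mono hsub).hausdorffMeasure_image_le (d := m) (by positivity)
    rw [measure_mono_null inter_subset_left h0, mul_zero] at h1
    have h2 := hausdorffMeasure_pi_real (ι := Fin m)
    rw [Fintype.card_fin] at h2
    rw [← h2]
    exact le_antisymm h1 zero_le

/-- Lines through `x` with slopes in `Θ` correspond to a set of directions of positive measure. -/
lemma hausdorffMeasure_line_directions_ne_zero [MeasurableSpace E] [BorelSpace E] {D a : ℝ}
    (ha : 0 < a) (hπτ : ∀ w, ‖w‖ ≤ D * max ‖π w‖ |τ w|)
    (hsurj : ∀ θ, ∃ w, π w = θ ∧ τ w = 1) {Θ : Set (Fin m → ℝ)} (hΘ : volume Θ ≠ 0)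
    {A : Set E} {x : E}
    (h : ∀ θ ∈ Θ, μH[a] (A ∩ {u | shear π τ θ u = shear π τ θ x}) ≠ 0) :
    μH[(m : ℝ)] {e : E | ‖e‖ = 1 ∧
      ENNReal.ofReal a ≤ dimH (A ∩ {y | ∃ r : ℝ, y = x + r • e})} ≠ 0 := by
  refine hausdorffMeasure_directions_ne_zero (π := π) (τ := τ) hΘ (fun e he => he.1)
    fun θ hθ => ?_
  obtain ⟨w, hw, hw1⟩ := hsurj θ
  have hw0 : 0 < ‖w‖ := norm_pos_iff.2 fun h => by simp [h] at hw1
  refine ⟨‖w‖⁻¹ • w, ⟨?_, ?_⟩, ?_, ?_⟩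
  · rw [norm_smul, norm_inv, norm_norm, inv_mul_cancel₀ hw0.ne']
  · have hsub : A ∩ {u | shear π τ θ u = shear π τ θ x} ⊆
        A ∩ {y | ∃ r : ℝ, y = x + r • ‖w‖⁻¹ • w} := by
      refine fun u hu => ⟨hu.1, τ (u - x) * ‖w‖, ?_⟩
      have hu2 : shear π τ θ (u - x) = 0 := by
        rw [shear_sub, sub_eq_zero]; exact hu.2
      have h0 : u - x - τ (u - x) • w = 0 := by
        have := hπτ (u - x - τ (u - x) • w)
        have h1 : π (u - x - τ (u - x) • w) = 0 := by
          rw [map_sub, map_smul, hw]; exact hu2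
        have h2 : τ (u - x - τ (u - x) • w) = 0 := by
          rw [map_sub τ, map_smul, hw1, smul_eq_mul, mul_one, sub_self]
        rw [h1, h2] at this
        simpa using this
      rw [smul_smul, mul_assoc, mul_inv_cancel₀ hw0.ne', mul_one, ← sub_eq_iff_eq_add',
        ← sub_eq_zero]
      exact h0
    have h1 : μH[((a.toNNReal : ℝ≥0) : ℝ)] (A ∩ {u | shear π τ θ u = shear π τ θ x}) ≠ 0 := by
      rw [Real.coe_toNNReal _ ha.le]; exact h θ hθ
    exact (le_dimH_of_hausdorffMeasure_ne_zero h1).trans (dimH_mono hsub)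
  · rw [map_smul, hw1, smul_eq_mul, mul_one]
    positivity
  · rw [map_smul, map_smul, hw, hw1, smul_eq_mul, mul_one]

end Directions

section Charts

variable {m : ℕ}

/-- The coordinates other than the `i`-th. -/
noncomputable def otherCoords (i : Fin (m + 1)) :
    EuclideanSpace ℝ (Fin (m + 1)) →L[ℝ] (Fin m → ℝ) :=
  ContinuousLinearMap.pi fun j => EuclideanSpace.proj (i.succAbove j)

lemma norm_le_mul_max_otherCoords (i : Fin (m + 1)) (w : EuclideanSpace ℝ (Fin (m + 1))) :
    ‖w‖ ≤ ((m : ℝ) + 1) * max ‖otherCoords i w‖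
      |(EuclideanSpace.proj i : EuclideanSpace ℝ (Fin (m + 1)) →L[ℝ] ℝ) w| := by
  set M := max ‖otherCoords i w‖
    |(EuclideanSpace.proj i : EuclideanSpace ℝ (Fin (m + 1)) →L[ℝ] ℝ) w|
  have hM : 0 ≤ M := (norm_nonneg _).trans (le_max_left _ _)
  have h1 : ∀ k, ‖w k‖ ≤ M := by
    intro k
    rcases Fin.eq_self_or_eq_succAbove i k with rfl | ⟨j, rfl⟩
    · exact le_max_right _ _
    · exact (norm_le_pi_norm (otherCoords i w) j).trans (le_max_left _ _)
  rw [EuclideanSpace.norm_eq]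
  refine Real.sqrt_le_iff.2 ⟨by positivity, ?_⟩
  calc ∑ k, ‖w k‖ ^ 2 ≤ ∑ _k : Fin (m + 1), M ^ 2 :=
        Finset.sum_le_sum fun k _ => pow_le_pow_left₀ (norm_nonneg _) (h1 k) 2
    _ = ((m : ℝ) + 1) * M ^ 2 := by simp
    _ ≤ _ := by
        rw [mul_pow]
        exact mul_le_mul_of_nonneg_right (le_self_pow₀ (by simp) two_ne_zero) (sq_nonneg M)

lemma exists_otherCoords_eq (i : Fin (m + 1)) (θ : Fin m → ℝ) :
    ∃ w, otherCoords i w = θ ∧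
      (EuclideanSpace.proj i : EuclideanSpace ℝ (Fin (m + 1)) →L[ℝ] ℝ) w = 1 := by
  refine ⟨WithLp.toLp 2 (Fin.insertNth (α := fun _ => ℝ) i 1 θ), ?_, ?_⟩
  · ext j
    simp [otherCoords]
  · simp

lemma exists_coord_measure_ne_zero {s : ℝ} (hs : 0 < s)
    {μ ν : Measure (EuclideanSpace ℝ (Fin (m + 1)))}
    [IsProbabilityMeasure μ] [IsProbabilityMeasure ν]
    (hμ : ∫⁻ x, ∫⁻ y, edist x y ^ (-s) ∂μ ∂μ ≠ ∞) :
    ∃ i : Fin (m + 1), (ν.prod μ) {q |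
      (EuclideanSpace.proj i : EuclideanSpace ℝ (Fin (m + 1)) →L[ℝ] ℝ) (q.2 - q.1) ≠ 0} ≠ 0 := by
  by_contra! hcon
  have h1 : ∀ᵐ q ∂ν.prod μ, q.2 = q.1 := by
    have h2 : ∀ᵐ q ∂ν.prod μ, ∀ i : Fin (m + 1),
        (EuclideanSpace.proj i : EuclideanSpace ℝ (Fin (m + 1)) →L[ℝ] ℝ) (q.2 - q.1) = 0 :=
      ae_all_iff.2 hcon
    filter_upwards [h2] with q hq
    rw [← sub_eq_zero]
    ext i
    exact hq i
  obtain ⟨x, hx⟩ := (Measure.ae_ae_of_ae_prod h1).exists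
  refine hμ ?_
  have h3 : ∀ᵐ u ∂μ, ∫⁻ y, edist u y ^ (-s) ∂μ = ∞ := by
    filter_upwards [hx] with u hu
    calc ∫⁻ y, edist u y ^ (-s) ∂μ = ∫⁻ _, ∞ ∂μ := by
          refine lintegral_congr_ae ?_
          filter_upwards [hx] with y hy
          rw [hu, hy, edist_self, ENNReal.zero_rpow_of_neg (neg_lt_zero.2 hs)]
      _ = ∞ := by simp
  rw [lintegral_congr_ae h3]
  simp

lemma lintegral_edist_rpow_neg_ne_top_of_le {X : Type*} [EMetricSpace X] [SecondCountableTopology X]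
    [MeasurableSpace X] [BorelSpace X] {μ : Measure X} [IsFiniteMeasure μ] {s t : ℝ} (ht : 0 ≤ t)
    (hts : t ≤ s) (h : ∫⁻ q, edist q.1 q.2 ^ (-s) ∂(μ.prod μ) ≠ ∞) :
    ∫⁻ q, edist q.1 q.2 ^ (-t) ∂(μ.prod μ) ≠ ∞ := by
  have hle : ∫⁻ q, edist q.1 q.2 ^ (-t) ∂(μ.prod μ) ≤
      ∫⁻ q, (1 + edist q.1 q.2 ^ (-s)) ∂(μ.prod μ) := by
    refine lintegral_mono fun q => ?_
    rcases le_total (edist q.1 q.2) 1 with h1 | h1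
    · exact (ENNReal.rpow_le_rpow_of_exponent_ge h1 (neg_le_neg hts)).trans le_add_self
    · refine le_trans ?_ le_self_add
      rw [ENNReal.rpow_neg, ENNReal.inv_le_one]
      exact ENNReal.one_rpow t ▸ ENNReal.rpow_le_rpow h1 ht
  refine (hle.trans_lt ?_).ne
  rw [lintegral_add_left measurable_const]
  exact ENNReal.add_lt_top.2 ⟨by simp [measure_lt_top], h.lt_top⟩

end Charts

theorem exists_measurableSet_dimH_le (m : ℕ) (hm : 0 < m) {s : ℝ} (hs : (m : ℝ) < s)
    {A : Set (EuclideanSpace ℝ (Fin (m + 1)))} (hA : MeasurableSet A)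
    (hdA : ENNReal.ofReal s < dimH A) :
    ∃ B : Set (EuclideanSpace ℝ (Fin (m + 1))), MeasurableSet B ∧ dimH B ≤ m ∧
      ∀ x ∉ B, 0 < μH[(m : ℝ)] {e : EuclideanSpace ℝ (Fin (m + 1)) | ‖e‖ = 1 ∧
        ENNReal.ofReal (s - m) ≤ dimH (A ∩ {y | ∃ r : ℝ, y = x + r • e})} := by
  have hm' : (0 : ℝ) < m := Nat.cast_pos.2 hm
  have hs0 : 0 < s := hm'.trans hs
  have ha : 0 < s - m := sub_pos.2 hs
  have hdist : ∀ t : ℝ, Measurable fun q : EuclideanSpace ℝ (Fin (m + 1)) ×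
      EuclideanSpace ℝ (Fin (m + 1)) => edist q.1 q.2 ^ t := fun t => by fun_prop
  obtain ⟨K, hKA, hK, μ, hμ, hμK, hμs⟩ := exists_measure_energy_lt_top hA hs0 hdA
  have hμs' : ∫⁻ q, edist q.1 q.2 ^ (-s) ∂(μ.prod μ) ≠ ∞ := by
    rw [lintegral_prod _ (hdist _).aemeasurable]; exact hμs.ne
  let τ : Fin (m + 1) → EuclideanSpace ℝ (Fin (m + 1)) →L[ℝ] ℝ := fun i => EuclideanSpace.proj i
  let B : Fin (m + 1) → Set (EuclideanSpace ℝ (Fin (m + 1))) := fun i =>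
    {x | volume {θ | lineThrough (otherCoords i) (τ i) (x, θ) ∈
      richLines (otherCoords i) (τ i) μ (s - m)} = 0}
  have hB : ∀ i, MeasurableSet (B i) := fun i =>
    measurable_measure_prodMk_left (measurableSet_richLines.preimage
      (continuous_lineThrough (π := otherCoords i) (τ := τ i)).measurable)
      (measurableSet_singleton 0)
  refine ⟨⋂ i, B i, MeasurableSet.iInter hB, ?_, fun x hx => ?_⟩
  · by_contra! hdB
    rw [← ENNReal.ofReal_natCast] at hdB
    obtain ⟨K', hK'B, -, ν, hν, hνK', hνm⟩ :=
      exists_measure_energy_lt_top (MeasurableSet.iInter hB) hm' hdB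
    obtain ⟨i, hi⟩ := exists_coord_measure_ne_zero (ν := ν) hs0 hμs.ne
    refine measure_volume_lineThrough_pos (π := otherCoords i) (τ := τ i) (a := s - m) hm
      (by positivity) (norm_le_mul_max_otherCoords i) (ν := ν) (μ := μ) ?_
      (lintegral_edist_rpow_neg_ne_top_of_le hm'.le hs.le hμs') ?_ hi ?_
    · rw [lintegral_prod _ (hdist _).aemeasurable]; exact hνm.ne
    · convert hμs' using 4 with q
      rw [ENNReal.rpow_neg, ENNReal.rpow_neg, ENNReal.rpow_neg, ← ENNReal.mul_inv,
        ← ENNReal.rpow_add_of_nonneg _ _ ha.le hm'.le, sub_add_cancel]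
      · exact Or.inr (ENNReal.rpow_ne_top_of_nonneg hm'.le (edist_ne_top _ _))
      · exact Or.inl (ENNReal.rpow_ne_top_of_nonneg ha.le (edist_ne_top _ _))
    · refine measure_mono_null (t := K'ᶜ) (fun x hx => fun hxK => ?_) hνK'
      exact hx (mem_iInter.1 (hK'B hxK) i)
  · obtain ⟨i, hi⟩ : ∃ i, x ∉ B i := by simpa using hx
    refine pos_iff_ne_zero.2 (hausdorffMeasure_line_directions_ne_zero (τ := τ i) ha
      (norm_le_mul_max_otherCoords i) (exists_otherCoords_eq i) hi fun θ hθ h0 => ?_)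
    exact hausdorffMeasure_slice_ne_zero ha hK hμK hθ
      (measure_mono_null (inter_subset_inter_left _ hKA) h0)

theorem stmt_16 (n : ℕ) (hn : 2 ≤ n) (s : ℝ) (hs1 : (n : ℝ) - 1 < s)
    (A : Set (EuclideanSpace ℝ (Fin n))) (hA : MeasurableSet A)
    (hdA : ENNReal.ofReal s < dimH A) :
    ∃ B : Set (EuclideanSpace ℝ (Fin n)), MeasurableSet B ∧
      dimH B ≤ (n : ℝ≥0∞) - 1 ∧
      ∀ x ∉ B, 0 < μH[(n : ℝ) - 1]
        {e : EuclideanSpace ℝ (Fin n) | ‖e‖ = 1 ∧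
          ENNReal.ofReal (s - ((n : ℝ) - 1)) ≤
            dimH (A ∩ {y | ∃ r : ℝ, y = x + r • e})} := by
  obtain ⟨m, rfl⟩ : ∃ m, n = m + 1 := ⟨n - 1, by omega⟩
  have h1 : ((m + 1 : ℕ) : ℝ) - 1 = m := by simp
  have h2 : ((m + 1 : ℕ) : ℝ≥0∞) - 1 = m := by
    rw [Nat.cast_add, Nat.cast_one, ENNReal.add_sub_cancel_right ENNReal.one_ne_top]
  rw [h1] at hs1
  rw [h1, h2]
  exact exists_measurableSet_dimH_le m (by omega) hs1 hA hdA
end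

section
/- Let n ≥ 1 and let 0 < s < n and 0 < t < n. There is a constant C = C(n, s, t) > 0 such that for all finite Borel measures μ and ν on ℝⁿ with compact support satisfying I_s(μ) < ∞ and I_t(ν) < ∞, the mutual energy satisfies I_{(s+t)/2}(μ, ν) = ∬ |x−y|^{−(s+t)/2} dμ(x) dν(y) ≤ C · ( I_s(μ) · I_t(ν) )^{1/2}; in particular this mutual energy is finite. -/
open MeasureTheory Metric Set
open scoped ENNReal RealInnerProductSpace

/-- The topological support of a measure: points all of whose neighbourhoods
have positive measure. -/
def sptm (n : ℕ) (μ : MeasureTheory.Measure (EuclideanSpace ℝ (Fin n))) :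
    Set (EuclideanSpace ℝ (Fin n)) :=
  {x | ∀ r > 0, 0 < μ (Metric.ball x r)}

/-- The `s`-energy `I_s(μ) = ∬ |x-y|^{-s} dμ(x) dμ(y)` of a measure. -/
noncomputable def energyI (n : ℕ) (s : ℝ)
    (μ : MeasureTheory.Measure (EuclideanSpace ℝ (Fin n))) : ℝ≥0∞ :=
  ∫⁻ x, ∫⁻ y, (‖x - y‖₊ : ℝ≥0∞) ^ (-s) ∂μ ∂μ

/-- The mutual `u`-energy `I_u(μ, ν) = ∬ |x-y|^{-u} dμ(x) dν(y)` of two measures. -/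
noncomputable def mutualEnergyI (n : ℕ) (u : ℝ)
    (μ ν : MeasureTheory.Measure (EuclideanSpace ℝ (Fin n))) : ℝ≥0∞ :=
  ∫⁻ x, ∫⁻ y, (‖x - y‖₊ : ℝ≥0∞) ^ (-u) ∂ν ∂μ

/-- The Fourier transform `μ̂(ξ) = ∫ e^{-2πi⟨ξ,y⟩} dμ(y)` of a measure. -/
noncomputable def ftm (n : ℕ) (μ : MeasureTheory.Measure (EuclideanSpace ℝ (Fin n)))
    (ξ : EuclideanSpace ℝ (Fin n)) : ℂ :=
  ∫ y, Complex.exp ((-2 * Real.pi * ⟪ξ, y⟫ : ℝ) * Complex.I) ∂μ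

/-- Cauchy–Schwarz for mutual energies of kernels given by superpositions of products. -/
theorem lintegral_lintegral_lintegral_mul_le {X P : Type*} [MeasurableSpace X]
    [MeasurableSpace P] (μ ν : Measure X) [SFinite μ] [SFinite ν] (ρ : Measure P) [SFinite ρ]
    {a b : X → P → ℝ≥0∞} (ha : Measurable (Function.uncurry a))
    (hb : Measurable (Function.uncurry b)) :
    ∫⁻ x, ∫⁻ y, ∫⁻ p, a x p * b y p ∂ρ ∂ν ∂μ ≤
      ((∫⁻ x, ∫⁻ y, ∫⁻ p, a x p * a y p ∂ρ ∂μ ∂μ) *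
        ∫⁻ x, ∫⁻ y, ∫⁻ p, b x p * b y p ∂ρ ∂ν ∂ν) ^ (1 / 2 : ℝ) := by
  have fubini : ∀ (μ ν : Measure X) [SFinite μ] [SFinite ν] {a b : X → P → ℝ≥0∞},
      Measurable (Function.uncurry a) → Measurable (Function.uncurry b) →
      ∫⁻ x, ∫⁻ y, ∫⁻ p, a x p * b y p ∂ρ ∂ν ∂μ =
        ∫⁻ p, (∫⁻ x, a x p ∂μ) * (∫⁻ y, b y p ∂ν) ∂ρ := by
    intro μ ν _ _ a b ha hb
    have hb' : Measurable fun p => ∫⁻ y, b y p ∂ν := hb.lintegral_prod_left'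
    have inner : ∀ x, ∫⁻ y, ∫⁻ p, a x p * b y p ∂ρ ∂ν =
        ∫⁻ p, a x p * ∫⁻ y, b y p ∂ν ∂ρ := by
      intro x
      rw [lintegral_lintegral_swap]
      · exact lintegral_congr fun p =>
          lintegral_const_mul _ (hb.comp (measurable_id.prodMk measurable_const))
      · exact ((ha.comp (measurable_const.prodMk measurable_snd)).mul hb).aemeasurable
    simp_rw [inner]
    rw [lintegral_lintegral_swap]
    · exact lintegral_congr fun p =>
        lintegral_mul_const _ (ha.comp (measurable_id.prodMk measurable_const))
    · exact (ha.mul (hb'.comp measurable_snd)).aemeasurable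
  rw [fubini μ ν ha hb, fubini μ μ ha ha, fubini ν ν hb hb,
    ENNReal.mul_rpow_of_nonneg _ _ (by norm_num)]
  have hf : Measurable fun p => ∫⁻ x, a x p ∂μ := ha.lintegral_prod_left'
  have hg : Measurable fun p => ∫⁻ x, b x p ∂ν := hb.lintegral_prod_left'
  have := ENNReal.lintegral_mul_le_Lp_mul_Lq ρ Real.HolderConjugate.two_two
    hf.aemeasurable hg.aemeasurable
  simpa only [Pi.mul_apply, ENNReal.rpow_two, sq] using this

theorem lintegral_Ioi_ofReal_rpow {u a : ℝ} (hu : 0 < u) (ha : 0 < a) :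
    ∫⁻ r in Ioi a, ENNReal.ofReal (r ^ (-u - 1)) = ENNReal.ofReal (a ^ (-u) / u) := by
  rw [← ofReal_integral_eq_lintegral_ofReal (integrableOn_Ioi_rpow_of_lt (by linarith) ha),
    integral_Ioi_rpow_of_lt (by linarith) ha]
  · congr 1
    rw [sub_add_cancel, neg_div_neg_eq]
  · filter_upwards [ae_restrict_mem measurableSet_Ioi] with r hr
    exact Real.rpow_nonneg (ha.le.trans (le_of_lt hr)) _

section BallKernel

variable {E : Type*} [NormedAddCommGroup E] [InnerProductSpace ℝ E] [FiniteDimensional ℝ E]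
  [MeasurableSpace E] [BorelSpace E]

/-- A kernel comparable to `|x - y|⁻ᵘ`, built from volumes of intersections of balls. -/
noncomputable def ballKernel (u : ℝ) (x y : E) : ℝ≥0∞ :=
  ∫⁻ r in Ioi (0 : ℝ), ENNReal.ofReal (r ^ (-u - Module.finrank ℝ E - 1)) *
    volume (ball x r ∩ ball y r)

theorem ofReal_rpow_mul_volume_ball (u : ℝ) (x : E) {r c : ℝ} (hr : 0 < r) (hc : 0 < c) :
    ENNReal.ofReal (r ^ (-u - Module.finrank ℝ E - 1)) * volume (ball x (c * r)) =
      ENNReal.ofReal (r ^ (-u - 1)) *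
        (ENNReal.ofReal (c ^ Module.finrank ℝ E) * volume (ball (0 : E) 1)) := by
  rw [Measure.addHaar_ball_of_pos _ _ (by positivity), ← mul_assoc, ← mul_assoc,
    ← ENNReal.ofReal_mul (by positivity), ← ENNReal.ofReal_mul (by positivity)]
  congr 2
  rw [mul_pow, mul_left_comm, mul_comm (c ^ _), ← Real.rpow_natCast r,
    ← Real.rpow_add hr]
  ring_nf

theorem ballKernel_le {u : ℝ} (hu : 0 < u) :
    ∃ B : ℝ≥0∞, B ≠ ∞ ∧ ∀ x y : E, ballKernel u x y ≤ B * (‖x - y‖₊ : ℝ≥0∞) ^ (-u) := by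
  set v := volume (ball (0 : E) 1) with hv
  have hv_top : v ≠ ∞ := measure_ball_lt_top.ne
  have hv_pos : v ≠ 0 := (measure_ball_pos _ _ one_pos).ne'
  have hB_pos : 0 < (1 / 2 : ℝ) ^ (-u) / u := by positivity
  refine ⟨ENNReal.ofReal ((1 / 2) ^ (-u) / u) * v, by finiteness, fun x y => ?_⟩
  rcases eq_or_ne x y with rfl | hxy
  · rw [sub_self, nnnorm_zero, ENNReal.coe_zero, ENNReal.zero_rpow_of_neg (by linarith),
      ENNReal.mul_top (mul_ne_zero (by simpa using hB_pos) hv_pos)]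
    exact le_top
  have hd : 0 < ‖x - y‖ := norm_pos_iff.2 (sub_ne_zero.2 hxy)
  have hd' : 0 < 1 / 2 * ‖x - y‖ := by positivity
  calc ballKernel u x y
      ≤ ∫⁻ r in Ioi (0 : ℝ), (Ioi (1 / 2 * ‖x - y‖)).indicator
          (fun r => ENNReal.ofReal (r ^ (-u - 1)) * v) r := by
        refine setLIntegral_mono' measurableSet_Ioi fun r (hr : 0 < r) => ?_
        by_cases h : 1 / 2 * ‖x - y‖ < r
        · rw [indicator_of_mem (mem_Ioi.2 h)]
          have := ofReal_rpow_mul_volume_ball u x hr one_pos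
          rw [one_mul, one_pow, ENNReal.ofReal_one, one_mul] at this
          rw [hv, ← this]
          gcongr
          exact inter_subset_left
        · have : ball x r ∩ ball y r = ∅ := by
            refine (ball_disjoint_ball ?_).inter_eq
            rw [dist_eq_norm]
            linarith
          simp [this]
    _ = (∫⁻ r in Ioi (1 / 2 * ‖x - y‖), ENNReal.ofReal (r ^ (-u - 1))) * v := by
        rw [setLIntegral_indicator measurableSet_Ioi, Ioi_inter_Ioi, sup_of_le_left hd'.le,
          lintegral_mul_const' _ _ hv_top]
    _ = ENNReal.ofReal ((1 / 2) ^ (-u) / u) * v * (‖x - y‖₊ : ℝ≥0∞) ^ (-u) := by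
        rw [lintegral_Ioi_ofReal_rpow hu hd', Real.mul_rpow (by norm_num) hd.le,
          mul_div_right_comm, ENNReal.ofReal_mul hB_pos.le, ← enorm_eq_nnnorm,
          ← ofReal_norm, ENNReal.ofReal_rpow_of_pos hd, mul_right_comm]

theorem le_ballKernel {u : ℝ} (hu : 0 < u) :
    ∃ A : ℝ≥0∞, A ≠ ∞ ∧ ∀ x y : E, (‖x - y‖₊ : ℝ≥0∞) ^ (-u) ≤ A * ballKernel u x y := by
  set v := volume (ball (0 : E) 1) with hv
  set c := ENNReal.ofReal (2 ^ (-u) / u) *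
    (ENNReal.ofReal ((1 / 2) ^ Module.finrank ℝ E) * v) with hc
  have hv_top : v ≠ ∞ := measure_ball_lt_top.ne
  have hv_pos : v ≠ 0 := (measure_ball_pos _ _ one_pos).ne'
  have hB_pos : 0 < (2 : ℝ) ^ (-u) / u := by positivity
  have hp_pos : 0 < (1 / 2 : ℝ) ^ Module.finrank ℝ E := by positivity
  have hc_top : c ≠ ∞ := by finiteness
  have hc_pos : c ≠ 0 :=
    mul_ne_zero (by simpa using hB_pos) (mul_ne_zero (ENNReal.ofReal_pos.2 hp_pos).ne' hv_pos)
  refine ⟨c⁻¹, ENNReal.inv_ne_top.2 hc_pos, fun x y => ?_⟩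
  have key : ∀ e : ℝ, ‖x - y‖ < e → ENNReal.ofReal e ^ (-u) ≤ c⁻¹ * ballKernel u x y := by
    intro e he
    have he0 : 0 < e := (norm_nonneg _).trans_lt he
    rw [mul_comm, ← div_eq_mul_inv, ENNReal.le_div_iff_mul_le (.inl hc_pos) (.inl hc_top)]
    calc ENNReal.ofReal e ^ (-u) * c
        = ∫⁻ r in Ioi (2 * e), ENNReal.ofReal (r ^ (-u - 1)) *
            (ENNReal.ofReal ((1 / 2) ^ Module.finrank ℝ E) * v) := by
          rw [lintegral_mul_const' _ _ (by finiteness),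
            lintegral_Ioi_ofReal_rpow hu (by positivity), Real.mul_rpow (by norm_num) he0.le,
            mul_div_right_comm, ENNReal.ofReal_mul hB_pos.le, ENNReal.ofReal_rpow_of_pos he0, hc]
          ring
      _ ≤ ∫⁻ r in Ioi (2 * e), ENNReal.ofReal (r ^ (-u - Module.finrank ℝ E - 1)) *
            volume (ball x r ∩ ball y r) := by
          refine setLIntegral_mono' measurableSet_Ioi fun r (hr : 2 * e < r) => ?_
          rw [hv, ← ofReal_rpow_mul_volume_ball u x (by linarith) (by norm_num)]
          gcongr
          refine subset_inter (ball_subset_ball (by linarith)) (ball_subset_ball' ?_)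
          rw [dist_eq_norm]
          linarith
      _ ≤ ballKernel u x y := lintegral_mono_set (Ioi_subset_Ioi (by positivity))
  have lim : Filter.Tendsto (fun e : ℝ => ENNReal.ofReal e ^ (-u))
      (nhdsWithin ‖x - y‖ (Ioi ‖x - y‖)) (nhds (ENNReal.ofReal ‖x - y‖ ^ (-u))) :=
    ((ENNReal.continuous_rpow_const.comp ENNReal.continuous_ofReal).tendsto _).mono_left
      nhdsWithin_le_nhds
  rw [← enorm_eq_nnnorm, ← ofReal_norm]
  exact le_of_tendsto lim (Filter.eventually_of_mem self_mem_nhdsWithin key)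

/-- Square-root factor of `ballKernel`: the indicator of `|x - z| < r` weighted by a power
of `r`. -/
noncomputable def ballFactor (s : ℝ) (x : E) (p : ℝ × E) : ℝ≥0∞ :=
  {q : E × (ℝ × E) | dist q.2.2 q.1 < q.2.1}.indicator
    (fun q => ENNReal.ofReal (q.2.1 ^ ((-s - Module.finrank ℝ E - 1) / 2))) (x, p)

theorem measurable_ballFactor (s : ℝ) :
    Measurable (Function.uncurry (ballFactor s : E → ℝ × E → ℝ≥0∞)) := by
  refine Measurable.indicator (by fun_prop) ?_
  exact measurableSet_lt (by fun_prop) (by fun_prop)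

theorem lintegral_ballFactor_mul (s t : ℝ) (x y : E) :
    ∫⁻ p, ballFactor s x p * ballFactor t y p ∂((volume.restrict (Ioi (0 : ℝ))).prod volume) =
      ballKernel ((s + t) / 2) x y := by
  have hm : ∀ (s : ℝ) (x : E), Measurable (ballFactor s x) := fun s x =>
    (measurable_ballFactor s).comp (measurable_const.prodMk measurable_id)
  rw [lintegral_prod _ ((hm s x).fun_mul (hm t y)).aemeasurable, ballKernel]
  refine setLIntegral_congr_fun measurableSet_Ioi fun r (hr : 0 < r) => ?_
  have : ∀ z, ballFactor s x (r, z) * ballFactor t y (r, z) =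
      (ball x r ∩ ball y r).indicator (fun _ => ENNReal.ofReal
        (r ^ (-((s + t) / 2) - Module.finrank ℝ E - 1))) z := by
    intro z
    have hpow : ENNReal.ofReal (r ^ ((-s - Module.finrank ℝ E - 1) / 2)) *
        ENNReal.ofReal (r ^ ((-t - Module.finrank ℝ E - 1) / 2)) =
        ENNReal.ofReal (r ^ (-((s + t) / 2) - Module.finrank ℝ E - 1)) := by
      rw [← ENNReal.ofReal_mul (by positivity), ← Real.rpow_add hr]
      ring_nf
    by_cases hx : dist z x < r <;> by_cases hy : dist z y < r <;>
      simp [ballFactor, indicator, hx, hy, hpow]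
  simp_rw [this]
  rw [lintegral_indicator_const (measurableSet_ball.inter measurableSet_ball)]

end BallKernel

theorem stmt_17 (n : ℕ) (hn : 1 ≤ n) (s t : ℝ)
    (hs0 : 0 < s) (hsn : s < n) (ht0 : 0 < t) (htn : t < n) :
    ∃ C : ℝ, 0 < C ∧
      ∀ μ ν : Measure (EuclideanSpace ℝ (Fin n)),
        IsFiniteMeasure μ → IsFiniteMeasure ν →
        IsCompact (sptm n μ) → IsCompact (sptm n ν) →
        energyI n s μ < ∞ → energyI n t ν < ∞ →
        mutualEnergyI n ((s + t) / 2) μ ν ≤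
            ENNReal.ofReal C * (energyI n s μ * energyI n t ν) ^ (1/2 : ℝ) ∧
          mutualEnergyI n ((s + t) / 2) μ ν < ∞ := by
  obtain ⟨A, hA, hA'⟩ := le_ballKernel (E := EuclideanSpace ℝ (Fin n))
    (u := (s + t) / 2) (by positivity)
  obtain ⟨B, hB, hB'⟩ := ballKernel_le (E := EuclideanSpace ℝ (Fin n)) hs0
  obtain ⟨D, hD, hD'⟩ := ballKernel_le (E := EuclideanSpace ℝ (Fin n)) ht0
  have hK : A * (B * D) ^ (1 / 2 : ℝ) ≠ ∞ := by finiteness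
  refine ⟨(A * (B * D) ^ (1 / 2 : ℝ)).toReal + 1, by positivity, ?_⟩
  intro μ ν _ _ _ _ hμ hν
  have energy_le : ∀ (u : ℝ) (B : ℝ≥0∞) (μ : Measure (EuclideanSpace ℝ (Fin n))), B ≠ ∞ →
      (∀ x y : EuclideanSpace ℝ (Fin n), ballKernel u x y ≤ B * (‖x - y‖₊ : ℝ≥0∞) ^ (-u)) →
      ∫⁻ x, ∫⁻ y, ballKernel u x y ∂μ ∂μ ≤ B * energyI n u μ := by
    intro u B μ hB h
    rw [energyI, ← lintegral_const_mul' _ _ hB]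
    refine lintegral_mono fun x => ?_
    rw [← lintegral_const_mul' _ _ hB]
    exact lintegral_mono fun y => h x y
  have cauchy := lintegral_lintegral_lintegral_mul_le μ ν
    ((volume.restrict (Ioi (0 : ℝ))).prod volume)
    (measurable_ballFactor (E := EuclideanSpace ℝ (Fin n)) s) (measurable_ballFactor t)
  simp_rw [lintegral_ballFactor_mul, add_self_div_two] at cauchy
  have main : mutualEnergyI n ((s + t) / 2) μ ν ≤
      ENNReal.ofReal ((A * (B * D) ^ (1 / 2 : ℝ)).toReal + 1) *
        (energyI n s μ * energyI n t ν) ^ (1 / 2 : ℝ) := by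
    calc mutualEnergyI n ((s + t) / 2) μ ν
        ≤ A * ∫⁻ x, ∫⁻ y, ballKernel ((s + t) / 2) x y ∂ν ∂μ := by
          rw [mutualEnergyI, ← lintegral_const_mul' _ _ hA]
          refine lintegral_mono fun x => ?_
          rw [← lintegral_const_mul' _ _ hA]
          exact lintegral_mono fun y => hA' x y
      _ ≤ A * ((B * energyI n s μ) * (D * energyI n t ν)) ^ (1 / 2 : ℝ) := by
          gcongr
          refine cauchy.trans ?_
          gcongr
          exacts [energy_le s B μ hB hB', energy_le t D ν hD hD']
      _ = A * (B * D) ^ (1 / 2 : ℝ) * (energyI n s μ * energyI n t ν) ^ (1 / 2 : ℝ) := by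
          rw [mul_mul_mul_comm, ENNReal.mul_rpow_of_nonneg _ _ (by norm_num), mul_assoc]
      _ ≤ _ := by
          gcongr
          exact ENNReal.le_ofReal_iff_toReal_le hK (by positivity) |>.2 (by linarith)
  exact ⟨main, main.trans_lt (by finiteness)⟩
end
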